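/- (Finite-time closeness of patched MALA and forward Euler in total variation.) Let U satisfy Assumption 1. There exists E_⋆ > 0 such that for every T > 0 there exists C(T) > 0 with the following property: for every stepsize h < 1, every x ∈ ℝ^n and every t ∈ [0,T], one has ‖P̄_h^{⌊t/h⌋}(x,·) − P̃_h^{⌊t/h⌋}(x,·)‖_TV ≤ C(T)·√h·U(x)³, where P̃_h is the forward Euler kernel and P̄_h the patched MALA kernel. -/

import Mathlib

open MeasureTheory Real Filter
open scoped ENNReal

noncomputable section

abbrev Euc (n : ℕ) := EuclideanSpace ℝ (Fin n)

/-- Second derivative of `U` at `x` as a bilinear form. -/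
def D2 {n : ℕ} (U : Euc n → ℝ) (x v w : Euc n) : ℝ :=
  iteratedFDeriv ℝ 2 U x ![v, w]

/-- Laplacian of `U` at `x`. -/
def lapl {n : ℕ} (U : Euc n → ℝ) (x : Euc n) : ℝ :=
  ∑ i, D2 U x (EuclideanSpace.single i 1) (EuclideanSpace.single i 1)

/-- Assumption 1 on the potential `U`. -/
structure Assumption1 (n : ℕ) (β : ℝ) (U : Euc n → ℝ) where
  smooth : ContDiff ℝ 4 U
  c : ℝ
  d : ℝ
  EB : ℝ
  c_pos : 0 < c
  c_lt : c < β
  d_pos : 0 < d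
  one_le : ∀ x, 1 ≤ U x
  quad_growth : ∀ C > (0:ℝ), ∃ E > (0:ℝ), ∀ x, U x > E → C * (1 + ‖x‖ ^ 2) ≤ U x
  driftB : ∀ x, U x > EB → lapl U x ≤ c * ‖gradient U x‖ ^ 2 - d * U x
  hess_lb : ∃ C : ℝ, 0 ≤ C ∧ ∀ x η : Euc n, -C * ‖η‖ ^ 2 ≤ D2 U x η η
  deriv_bound : ∃ C > (0:ℝ), ∀ x,
    ‖iteratedFDeriv ℝ 4 U x‖ ⊔ ‖iteratedFDeriv ℝ 3 U x‖ ⊔ ‖iteratedFDeriv ℝ 2 U x‖ ⊔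
      ‖gradient U x‖ ≤ C * U x

/-- The Gibbs measure with density `Z⁻¹ exp(-β U x)`. -/
def gibbs (n : ℕ) (β : ℝ) (U : Euc n → ℝ) : Measure (Euc n) :=
  volume.withDensity fun x => ENNReal.ofReal (exp (-β * U x) / ∫ y, exp (-β * U y))

/-- Total variation distance, `‖μ - ν‖_TV = 2 sup_A |μ(A) - ν(A)|`. -/
def tvDist {α : Type*} [MeasurableSpace α] (μ ν : Measure α) : ℝ :=
  2 * ⨆ A : {A : Set α // MeasurableSet A}, |(μ A.1).toReal - (ν A.1).toReal|

/-- Forward Euler transition density `q_h(x,y)`. -/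
def eulerDensity (n : ℕ) (β h : ℝ) (U : Euc n → ℝ) (x y : Euc n) : ℝ :=
  (4 * π * β⁻¹ * h) ^ (-(n : ℝ) / 2) *
    exp (-‖y - x + h • gradient U x‖ ^ 2 / (4 * β⁻¹ * h))

/-- MALA acceptance probability `α_h(x,y)`. -/
def accept (n : ℕ) (β h : ℝ) (U : Euc n → ℝ) (x y : Euc n) : ℝ :=
  min 1 ((eulerDensity n β h U y x * exp (-β * U y)) /
         (eulerDensity n β h U x y * exp (-β * U x)))

/-- One-step MALA transition kernel. -/
def malaKernel (n : ℕ) (β h : ℝ) (U : Euc n → ℝ) (x : Euc n) : Measure (Euc n) :=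
  volume.withDensity (fun y => ENNReal.ofReal (accept n β h U x y * eulerDensity n β h U x y))
  + (1 - ∫⁻ y, ENNReal.ofReal (accept n β h U x y * eulerDensity n β h U x y)) • Measure.dirac x

/-- `k`-step iterate of a transition kernel. -/
def iterKernel {α : Type*} [MeasurableSpace α] (κ : α → Measure α) : ℕ → α → Measure α
  | 0, x => Measure.dirac x
  | k + 1, x => (iterKernel κ k x).bind κ

/-- The level set `R_h = {x : U(x) < E_⋆ h^{-1/4}}`. -/
def Rset (n : ℕ) (h Estar : ℝ) (U : Euc n → ℝ) : Set (Euc n) :=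
  {x | U x < Estar * h ^ (-(1:ℝ) / 4)}

open scoped Classical in
/-- Patched MALA acceptance probability. -/
def acceptBar (n : ℕ) (β h Estar : ℝ) (U : Euc n → ℝ) (x y : Euc n) : ℝ :=
  if x ∈ Rset n h Estar U ∧ y ∈ Rset n h Estar U then accept n β h U x y else 0

/-- One-step patched MALA transition kernel. -/
def patchedKernel (n : ℕ) (β h Estar : ℝ) (U : Euc n → ℝ) (x : Euc n) : Measure (Euc n) :=
  volume.withDensity
    (fun y => ENNReal.ofReal (acceptBar n β h Estar U x y * eulerDensity n β h U x y))
  + (1 - ∫⁻ y, ENNReal.ofReal (acceptBar n β h Estar U x y * eulerDensity n β h U x y)) •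
      Measure.dirac x

/-- Standard Gaussian measure `N(0, I)` on `ℝ^n`. -/
def stdGaussian (n : ℕ) : Measure (Euc n) :=
  volume.withDensity fun ξ => ENNReal.ofReal ((2 * π) ^ (-(n : ℝ) / 2) * exp (-‖ξ‖ ^ 2 / 2))

/-- Forward Euler transition kernel. -/
def eulerKernel (n : ℕ) (β h : ℝ) (U : Euc n → ℝ) (x : Euc n) : Measure (Euc n) :=
  volume.withDensity fun y => ENNReal.ofReal (eulerDensity n β h U x y)

/-! From `x` both chains can use the same Euler proposal `y`, so their one-step laws differ by at
most the probability that the patched chain rejects `y`. For `x, y ∈ R_h` the logarithm of the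
acceptance ratio is a trapezoid-rule error for `U`, and Taylor's formula bounds the rejection
probability by a multiple of `√h³ U(x)³`; the proposal leaves `R_h` with probability at most a
multiple of `h³ U(x)¹²`. On `R_h` one has `√h U² ≤ E_⋆²`, which makes every power of `U` a Lyapunov
function of the patched chain, `P̄_h Uᵖ ≤ (1 + K h) Uᵖ`. The sum of the one-step errors over the
`t / h` steps is therefore of order `√h U(x)³ + h² U(x)¹²`, and the second term is dominated by the
first when `√h U(x)³ ≤ 1`; otherwise the bound is trivial. -/

section SegmentRemainders

variable {F : Type*} [NormedAddCommGroup F] [NormedSpace ℝ F] {f f' f'' f''' : ℝ → F} {M : ℝ}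

lemma norm_sub_sub_deriv_le_of_norm_deriv2_le (hf : ∀ t, HasDerivAt f (f' t) t)
    (hf' : ∀ t, HasDerivAt f' (f'' t) t) (hM : ∀ t ∈ Set.Icc (0 : ℝ) 1, ‖f'' t‖ ≤ M) :
    ‖f 1 - f 0 - f' 0‖ ≤ M := by
  have hM₀ : 0 ≤ M := (norm_nonneg _).trans (hM 0 (by simp))
  have hf'_sub : ∀ t ∈ Set.Icc (0 : ℝ) 1, ‖f' t - f' 0‖ ≤ M * (t - 0) :=
    norm_image_sub_le_of_norm_deriv_le_segment' (fun t _ => (hf' t).hasDerivWithinAt)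
      fun t ht => hM t ⟨ht.1, ht.2.le⟩
  have hg : ∀ t, HasDerivAt (fun t => f t - t • f' 0) (f' t - f' 0) t := fun t => by
    simpa using (hf t).fun_sub ((hasDerivAt_id' t).smul_const (f' 0))
  have := norm_image_sub_le_of_norm_deriv_le_segment_01' (fun t _ => (hg t).hasDerivWithinAt)
    fun t ht => (hf'_sub t ⟨ht.1, ht.2.le⟩).trans (by nlinarith [ht.1, ht.2])
  convert this using 2
  module

lemma norm_sub_sub_trapezoid_le_of_norm_deriv3_le (hf : ∀ t, HasDerivAt f (f' t) t)
    (hf' : ∀ t, HasDerivAt f' (f'' t) t) (hf'' : ∀ t, HasDerivAt f'' (f''' t) t)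
    (hM : ∀ t ∈ Set.Icc (0 : ℝ) 1, ‖f''' t‖ ≤ M) :
    ‖f 1 - f 0 - (1 / 2 : ℝ) • (f' 0 + f' 1)‖ ≤ M := by
  have hM₀ : 0 ≤ M := (norm_nonneg _).trans (hM 0 (by simp))
  have hg : ∀ t, HasDerivAt (fun t => f t - (t / 2) • (f' 0 + f' t))
      ((1 / 2 : ℝ) • (f' t - f' 0 - t • f'' t)) t := fun t => by
    convert (hf t).fun_sub (((hasDerivAt_id' t).div_const 2).fun_smul ((hf' t).const_add (f' 0)))
      using 1
    module
  have hg' : ∀ t, HasDerivAt (fun t => f' t - f' 0 - t • f'' t) (-t • f''' t) t := fun t => by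
    convert ((hf' t).sub_const (f' 0)).fun_sub ((hasDerivAt_id' t).fun_smul (hf'' t)) using 1
    module
  have hg'_bound : ∀ t ∈ Set.Icc (0 : ℝ) 1, ‖f' t - f' 0 - t • f'' t‖ ≤ M * t := fun t ht => by
    have := norm_image_sub_le_of_norm_deriv_le_segment' (fun t _ => (hg' t).hasDerivWithinAt)
      (fun t ht => by
        rw [norm_smul, norm_neg, norm_of_nonneg ht.1]
        exact (mul_le_of_le_one_left (norm_nonneg _) ht.2.le).trans (hM t ⟨ht.1, ht.2.le⟩)) t ht
    simpa using this
  have := norm_image_sub_le_of_norm_deriv_le_segment_01' (C := M)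
    (fun t _ => (hg t).hasDerivWithinAt) fun t ht => by
      rw [norm_smul, norm_of_nonneg (by norm_num)]
      nlinarith [hg'_bound t ⟨ht.1, ht.2.le⟩, ht.1, ht.2]
  convert this using 2
  module

end SegmentRemainders

section SelfDominated

variable {E : Type*} [NormedAddCommGroup E] [NormedSpace ℝ E]

/-- `V` is a positive `C^m` function all of whose derivatives up to order `m` are bounded by
`C * V`, in the sense of `Assumption1.deriv_bound`. The case `k = 0` records `1 ≤ C`. -/
structure SelfDominated (m : ℕ) (C : ℝ) (V : E → ℝ) : Prop where
  contDiff : ContDiff ℝ m V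
  pos : ∀ x, 0 < V x
  norm_iteratedFDeriv_le : ∀ k ≤ m, ∀ x, ‖iteratedFDeriv ℝ k V x‖ ≤ C * V x

namespace SelfDominated

variable {m : ℕ} {C D : ℝ} {V W : E → ℝ}

lemma one_le (hV : SelfDominated m C V) : 1 ≤ C := by
  have h := hV.norm_iteratedFDeriv_le 0 m.zero_le 0
  rw [norm_iteratedFDeriv_zero, norm_of_nonneg (hV.pos 0).le] at h
  nlinarith [hV.pos 0]

lemma mono_order {k : ℕ} (hV : SelfDominated m C V) (hk : k ≤ m) : SelfDominated k C V where
  contDiff := hV.contDiff.of_le (mod_cast hk)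
  pos := hV.pos
  norm_iteratedFDeriv_le j hj := hV.norm_iteratedFDeriv_le j (hj.trans hk)

lemma const_one (m : ℕ) : SelfDominated m 1 (fun _ : E => (1 : ℝ)) where
  contDiff := contDiff_const
  pos _ := one_pos
  norm_iteratedFDeriv_le k _ x := by
    rcases k.eq_zero_or_pos with rfl | hk
    · simp
    · simp [iteratedFDeriv_const_of_ne hk.ne']

lemma mul (hV : SelfDominated m C V) (hW : SelfDominated m D W) :
    SelfDominated m (2 ^ m * C * D) (fun x => V x * W x) where
  contDiff := hV.contDiff.mul hW.contDiff
  pos x := mul_pos (hV.pos x) (hW.pos x)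
  norm_iteratedFDeriv_le k hk x := by
    have hC := hV.one_le
    have hD := hW.one_le
    have hVx := hV.pos x
    have hWx := hW.pos x
    calc ‖iteratedFDeriv ℝ k (fun x => V x * W x) x‖
        ≤ ∑ i ∈ Finset.range (k + 1),
            (k.choose i : ℝ) * ‖iteratedFDeriv ℝ i V x‖ * ‖iteratedFDeriv ℝ (k - i) W x‖ :=
          norm_iteratedFDeriv_mul_le hV.contDiff hW.contDiff x (mod_cast hk)
      _ ≤ ∑ i ∈ Finset.range (k + 1), (k.choose i : ℝ) * (C * V x) * (D * W x) := by
          gcongr with i hi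
          · exact hV.norm_iteratedFDeriv_le i (by grind) x
          · exact hW.norm_iteratedFDeriv_le (k - i) (by omega) x
      _ = 2 ^ k * (C * V x) * (D * W x) := by
          rw [← Finset.sum_mul, ← Finset.sum_mul]
          exact_mod_cast congrArg (fun s : ℕ => (s : ℝ) * (C * V x) * (D * W x))
            (Nat.sum_range_choose k)
      _ ≤ 2 ^ m * (C * V x) * (D * W x) := by
          gcongr
          exact one_le_two
      _ = 2 ^ m * C * D * (V x * W x) := by ring

lemma pow (hV : SelfDominated m C V) (p : ℕ) :
    SelfDominated m ((2 ^ m * C) ^ p) (fun x => V x ^ p) := by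
  induction p with
  | zero => simpa only [pow_zero] using const_one m
  | succ p ih =>
    have hconst : (2 ^ m * C) ^ (p + 1) = 2 ^ m * (2 ^ m * C) ^ p * C := by ring
    simpa only [hconst, pow_succ (V _)] using ih.mul hV

lemma norm_fderiv_le (hV : SelfDominated 1 C V) (x : E) : ‖fderiv ℝ V x‖ ≤ C * V x :=
  norm_iteratedFDeriv_one (𝕜 := ℝ) V ▸ hV.norm_iteratedFDeriv_le 1 le_rfl x

lemma le_mul_exp (hV : SelfDominated 1 C V) (x y : E) : V y ≤ V x * exp (C * ‖y - x‖) := by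
  have hdiff : Differentiable ℝ V := hV.contDiff.differentiable (by simp)
  have hlog : ‖log (V y) - log (V x)‖ ≤ C * ‖y - x‖ := by
    refine convex_univ.norm_image_sub_le_of_norm_hasFDerivWithin_le
      (fun z _ => ((hdiff z).hasFDerivAt.log (hV.pos z).ne').hasFDerivWithinAt)
      (fun z _ => ?_) (Set.mem_univ x) (Set.mem_univ y)
    rw [norm_smul, norm_inv, norm_of_nonneg (hV.pos z).le, inv_mul_le_iff₀ (hV.pos z), mul_comm]
    exact hV.norm_fderiv_le z
  rw [← log_le_log_iff (hV.pos y) (mul_pos (hV.pos x) (exp_pos _)),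
    log_mul (hV.pos x).ne' (exp_ne_zero _), log_exp]
  linarith [(abs_le.1 hlog).2]

lemma le_mul_exp_of_mem_segment (hV : SelfDominated 1 C V) {x v : E} {t : ℝ}
    (ht : t ∈ Set.Icc (0 : ℝ) 1) : V (x + t • v) ≤ V x * exp (C * ‖v‖) := by
  have hC := hV.one_le
  have hVx := hV.pos x
  have htv : ‖x + t • v - x‖ ≤ ‖v‖ := by
    rw [add_sub_cancel_left, norm_smul, norm_of_nonneg ht.1]
    exact mul_le_of_le_one_left (norm_nonneg v) ht.2
  refine (hV.le_mul_exp x _).trans ?_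
  gcongr

lemma abs_sub_le (hV : SelfDominated 1 C V) (x y : E) :
    |V y - V x| ≤ V x * exp (C * ‖y - x‖) := by
  have hC := hV.one_le
  have hexp : 1 ≤ exp (C * ‖y - x‖) := one_le_exp (by positivity)
  rw [abs_le]
  constructor <;> nlinarith [hV.le_mul_exp x y, hV.pos x, hV.pos y]

lemma hasDerivAt_iteratedFDeriv_line {k : ℕ} (hV : SelfDominated m C V) (hk : k < m) (x v : E)
    (t : ℝ) : HasDerivAt (fun s : ℝ => iteratedFDeriv ℝ k V (x + s • v) fun _ => v)
      (iteratedFDeriv ℝ (k + 1) V (x + t • v) fun _ => v) t := by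
  have hVk : ContDiff ℝ (k + 1) V := hV.contDiff.of_le (mod_cast hk)
  rw [← hVk.contDiffAt.deriv_fderiv_add_smul, hasDerivAt_deriv_iff]
  have hdiff := hVk.differentiable_iteratedFDeriv (m := k) (by norm_cast; omega)
  fun_prop

lemma norm_iteratedFDeriv_line_le {k : ℕ} (hV : SelfDominated m C V) (hm : 1 ≤ m) (hk : k ≤ m)
    (x v : E) {t : ℝ} (ht : t ∈ Set.Icc (0 : ℝ) 1) :
    ‖iteratedFDeriv ℝ k V (x + t • v) fun _ => v‖ ≤ C * V x * exp (C * ‖v‖) * ‖v‖ ^ k := by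
  have hC := hV.one_le
  calc ‖iteratedFDeriv ℝ k V (x + t • v) fun _ => v‖
      ≤ ‖iteratedFDeriv ℝ k V (x + t • v)‖ * ‖v‖ ^ k := by
        simpa using (iteratedFDeriv ℝ k V (x + t • v)).le_opNorm fun _ => v
    _ ≤ C * (V x * exp (C * ‖v‖)) * ‖v‖ ^ k := by
        gcongr
        exact (hV.norm_iteratedFDeriv_le k hk _).trans
          (by gcongr; exact (hV.mono_order hm).le_mul_exp_of_mem_segment ht)
    _ = C * V x * exp (C * ‖v‖) * ‖v‖ ^ k := by ring

lemma abs_sub_sub_fderiv_le (hV : SelfDominated 2 C V) (x y : E) :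
    |V y - V x - fderiv ℝ V x (y - x)| ≤ C * V x * exp (C * ‖y - x‖) * ‖y - x‖ ^ 2 := by
  simpa using norm_sub_sub_deriv_le_of_norm_deriv2_le
    (hV.hasDerivAt_iteratedFDeriv_line (k := 0) two_pos x (y - x))
    (hV.hasDerivAt_iteratedFDeriv_line (k := 1) one_lt_two x (y - x))
    fun t => hV.norm_iteratedFDeriv_line_le one_le_two le_rfl x (y - x)

lemma abs_sub_sub_trapezoid_le (hV : SelfDominated 3 C V) (x y : E) :
    |V y - V x - (fderiv ℝ V x (y - x) + fderiv ℝ V y (y - x)) / 2|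
      ≤ C * V x * exp (C * ‖y - x‖) * ‖y - x‖ ^ 3 := by
  have := norm_sub_sub_trapezoid_le_of_norm_deriv3_le
    (hV.hasDerivAt_iteratedFDeriv_line (k := 0) three_pos x (y - x))
    (hV.hasDerivAt_iteratedFDeriv_line (k := 1) (by norm_num) x (y - x))
    (hV.hasDerivAt_iteratedFDeriv_line (k := 2) (by norm_num) x (y - x))
    fun t => hV.norm_iteratedFDeriv_line_le (by norm_num) le_rfl x (y - x)
  simpa [div_eq_inv_mul] using this

lemma norm_fderiv_sub_le (hV : SelfDominated 2 C V) (x y : E) :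
    ‖fderiv ℝ V y - fderiv ℝ V x‖ ≤ C * V x * exp (C * ‖y - x‖) * ‖y - x‖ := by
  have hC := hV.one_le
  have hdiff : Differentiable ℝ (fderiv ℝ V) :=
    (hV.contDiff.fderiv_right (m := 1) (by norm_num)).differentiable (by norm_num)
  refine (convex_segment x y).norm_image_sub_le_of_norm_fderiv_le (𝕜 := ℝ)
    (fun z _ => hdiff z) (fun z hz => ?_) (left_mem_segment ℝ x y) (right_mem_segment ℝ x y)
  rw [segment_eq_image'] at hz
  obtain ⟨t, ht, rfl⟩ := hz
  rw [← norm_iteratedFDeriv_one, norm_iteratedFDeriv_fderiv, mul_assoc]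
  exact (hV.norm_iteratedFDeriv_le 2 le_rfl _).trans
    (by gcongr; exact (hV.mono_order one_le_two).le_mul_exp_of_mem_segment ht)

lemma abs_sq_norm_fderiv_sub_le (hV : SelfDominated 2 C V) (x y : E) :
    |‖fderiv ℝ V y‖ ^ 2 - ‖fderiv ℝ V x‖ ^ 2|
      ≤ 2 * C ^ 2 * V x ^ 2 * exp (2 * C * ‖y - x‖) * ‖y - x‖ := by
  have hV₁ := hV.mono_order one_le_two
  have hC := hV.one_le
  have hx := hV.pos x
  have hsum : ‖fderiv ℝ V y‖ + ‖fderiv ℝ V x‖ ≤ 2 * C * V x * exp (C * ‖y - x‖) := by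
    have hexp : 1 ≤ exp (C * ‖y - x‖) := one_le_exp (by positivity)
    calc ‖fderiv ℝ V y‖ + ‖fderiv ℝ V x‖
        ≤ C * (V x * exp (C * ‖y - x‖)) + C * (V x * exp (C * ‖y - x‖)) := by
          gcongr
          · exact (hV₁.norm_fderiv_le y).trans (by gcongr; exact hV₁.le_mul_exp x y)
          · exact (hV₁.norm_fderiv_le x).trans (by gcongr; exact le_mul_of_one_le_right hx.le hexp)
      _ = 2 * C * V x * exp (C * ‖y - x‖) := by ring
  calc |‖fderiv ℝ V y‖ ^ 2 - ‖fderiv ℝ V x‖ ^ 2|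
      = (‖fderiv ℝ V y‖ + ‖fderiv ℝ V x‖) * |‖fderiv ℝ V y‖ - ‖fderiv ℝ V x‖| := by
        rw [sq_sub_sq, abs_mul, abs_of_nonneg (by positivity)]
    _ ≤ (2 * C * V x * exp (C * ‖y - x‖)) * (C * V x * exp (C * ‖y - x‖) * ‖y - x‖) := by
        gcongr
        exact (abs_norm_sub_norm_le _ _).trans (hV.norm_fderiv_sub_le x y)
    _ = 2 * C ^ 2 * V x ^ 2 * exp (2 * C * ‖y - x‖) * ‖y - x‖ := by
        rw [show 2 * C * ‖y - x‖ = C * ‖y - x‖ + C * ‖y - x‖ by ring, exp_add]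
        ring

end SelfDominated

end SelfDominated

section MarkovChains

variable {X : Type*} [MeasurableSpace X]

lemma isProbabilityMeasure_iterKernel {κ : X → Measure X} (hκ : Measurable κ)
    [∀ x, IsProbabilityMeasure (κ x)] (k : ℕ) (x : X) :
    IsProbabilityMeasure (iterKernel κ k x) := by
  induction k with
  | zero => exact Measure.dirac.isProbabilityMeasure
  | succ k ih => exact isProbabilityMeasure_bind hκ.aemeasurable (.of_forall inferInstance)

lemma lintegral_iterKernel_le_pow_mul {κ : X → Measure X} (hκ : Measurable κ) {V : X → ℝ≥0∞}
    (hV : Measurable V) {a : ℝ≥0∞} (h : ∀ x, ∫⁻ y, V y ∂κ x ≤ a * V x) (k : ℕ) (x : X) :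
    ∫⁻ y, V y ∂iterKernel κ k x ≤ a ^ k * V x := by
  induction k with
  | zero => rw [iterKernel, lintegral_dirac' x hV, pow_zero, one_mul]
  | succ k ih =>
    rw [iterKernel, Measure.lintegral_bind hκ.aemeasurable hV.aemeasurable]
    calc ∫⁻ y, ∫⁻ z, V z ∂κ y ∂iterKernel κ k x
        ≤ ∫⁻ y, a * V y ∂iterKernel κ k x := lintegral_mono h
      _ = a * ∫⁻ y, V y ∂iterKernel κ k x := lintegral_const_mul _ hV
      _ ≤ a * (a ^ k * V x) := by gcongr
      _ = a ^ (k + 1) * V x := by rw [pow_succ', mul_assoc]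

/-- Telescoping: the `κ'`-chain started after `j` steps of the `κ`-chain interpolates between
the two iterates, and passing from `j` to `j + 1` costs the one-step error `r` averaged over
the law of the `κ`-chain at time `j`. -/
lemma lintegral_iterKernel_le_add_sum {κ κ' : X → Measure X} (hκ : Measurable κ)
    (hκ' : Measurable κ') [∀ x, IsProbabilityMeasure (κ' x)] {r : X → ℝ≥0∞}
    (h : ∀ x (f : X → ℝ≥0∞), Measurable f → (∀ y, f y ≤ 1) →
      ∫⁻ y, f y ∂κ x ≤ ∫⁻ y, f y ∂κ' x + r x)
    (k : ℕ) (x : X) {f : X → ℝ≥0∞} (hf : Measurable f) (hf₁ : ∀ y, f y ≤ 1) :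
    ∫⁻ y, f y ∂iterKernel κ k x
      ≤ ∫⁻ y, f y ∂iterKernel κ' k x + ∑ j ∈ Finset.range k, ∫⁻ y, r y ∂iterKernel κ j x := by
  induction k generalizing f with
  | zero => simp only [iterKernel, Finset.range_zero, Finset.sum_empty, add_zero, le_refl]
  | succ k ih =>
    have hg : Measurable fun y => ∫⁻ z, f z ∂κ' y := (Measure.measurable_lintegral hf).comp hκ'
    have hg₁ (y : X) : ∫⁻ z, f z ∂κ' y ≤ 1 :=
      (lintegral_mono hf₁).trans_eq (by rw [lintegral_one, measure_univ])
    rw [iterKernel, iterKernel, Measure.lintegral_bind hκ.aemeasurable hf.aemeasurable,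
      Measure.lintegral_bind hκ'.aemeasurable hf.aemeasurable, Finset.sum_range_succ, ← add_assoc]
    calc ∫⁻ y, ∫⁻ z, f z ∂κ y ∂iterKernel κ k x
        ≤ ∫⁻ y, (∫⁻ z, f z ∂κ' y + r y) ∂iterKernel κ k x := lintegral_mono fun y => h y f hf hf₁
      _ = ∫⁻ y, ∫⁻ z, f z ∂κ' y ∂iterKernel κ k x + ∫⁻ y, r y ∂iterKernel κ k x :=
          lintegral_add_left hg _
      _ ≤ _ := by gcongr; exact ih hg hg₁

lemma tvDist_le_two_mul {μ ν : Measure X} [IsProbabilityMeasure μ] [IsProbabilityMeasure ν]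
    {ε : ℝ} (hε : 0 ≤ ε) (h : ∀ A, MeasurableSet A → μ A ≤ ν A + ENNReal.ofReal ε) :
    tvDist μ ν ≤ 2 * ε := by
  have hle (A : Set X) (hA : MeasurableSet A) : μ.real A ≤ ν.real A + ε := by
    simpa only [measureReal_def, ENNReal.toReal_add (measure_ne_top ν A) ENNReal.ofReal_ne_top,
      ENNReal.toReal_ofReal hε] using ENNReal.toReal_mono (by finiteness) (h A hA)
  have : Nonempty {A : Set X // MeasurableSet A} := ⟨⟨∅, .empty⟩⟩
  refine mul_le_mul_of_nonneg_left (ciSup_le fun A => abs_le.2 ?_) zero_le_two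
  have hcompl := hle A.1ᶜ A.2.compl
  rw [probReal_compl_eq_one_sub A.2, probReal_compl_eq_one_sub A.2] at hcompl
  have hA := hle A.1 A.2
  rw [measureReal_def, measureReal_def] at hA hcompl
  constructor <;> linarith

lemma tvDist_le_two (μ ν : Measure X) [IsProbabilityMeasure μ] [IsProbabilityMeasure ν] :
    tvDist μ ν ≤ 2 := by
  have h (A : Set X) (_ : MeasurableSet A) : μ A ≤ ν A + ENNReal.ofReal 1 :=
    ENNReal.ofReal_one.symm ▸ prob_le_one.trans le_add_self
  simpa only [mul_one] using tvDist_le_two_mul zero_le_one h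

lemma tvDist_iterKernel_le_two_mul {κ κ' : X → Measure X} (hκ : Measurable κ)
    (hκ' : Measurable κ') [∀ x, IsProbabilityMeasure (κ x)] [∀ x, IsProbabilityMeasure (κ' x)]
    {r : X → ℝ≥0∞}
    (h : ∀ x (f : X → ℝ≥0∞), Measurable f → (∀ y, f y ≤ 1) →
      ∫⁻ y, f y ∂κ x ≤ ∫⁻ y, f y ∂κ' x + r x)
    {k : ℕ} {x : X} {ε : ℝ} (hε : 0 ≤ ε)
    (hr : ∀ j < k, ∫⁻ y, r y ∂iterKernel κ j x ≤ ENNReal.ofReal ε) :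
    tvDist (iterKernel κ k x) (iterKernel κ' k x) ≤ 2 * (k * ε) := by
  have := isProbabilityMeasure_iterKernel hκ k x
  have := isProbabilityMeasure_iterKernel hκ' k x
  refine tvDist_le_two_mul (by positivity) fun A hA => ?_
  have hindicator := lintegral_iterKernel_le_add_sum hκ hκ' h k x (measurable_one.indicator hA)
    (Set.indicator_le_self' fun _ _ => zero_le_one)
  rw [lintegral_indicator_one hA, lintegral_indicator_one hA] at hindicator
  refine hindicator.trans (add_le_add_right ?_ _)
  calc ∑ j ∈ Finset.range k, ∫⁻ y, r y ∂iterKernel κ j x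
      ≤ ∑ _j ∈ Finset.range k, ENNReal.ofReal ε :=
        Finset.sum_le_sum fun _ hj => hr _ (Finset.mem_range.1 hj)
    _ = ENNReal.ofReal (k * ε) := by
        rw [Finset.sum_const, Finset.card_range, nsmul_eq_mul, ENNReal.ofReal_mul k.cast_nonneg,
          ENNReal.ofReal_natCast]

end MarkovChains

section DiffusiveScaling

lemma exp_mul_pow_le_mul_exp_div {a s t : ℝ} (ha : 0 ≤ a) (hs : 0 < s) (hs₁ : s ≤ 1) (ht : 0 ≤ t)
    (k : ℕ) : exp (a * t) * t ^ k ≤ k.factorial * s ^ k * exp ((a + 1) * (t / s)) := by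
  have hts : t ≤ t / s := le_div_self ht hs hs₁
  have hpow : (t / s) ^ k ≤ k.factorial * exp (t / s) := by
    have := pow_div_factorial_le_exp (t / s) (by positivity) k
    rwa [div_le_iff₀ (by positivity), mul_comm] at this
  calc exp (a * t) * t ^ k = exp (a * t) * (s ^ k * (t / s) ^ k) := by
        rw [← mul_pow, mul_div_cancel₀ t hs.ne']
    _ ≤ exp (a * (t / s)) * (s ^ k * (k.factorial * exp (t / s))) := by gcongr
    _ = k.factorial * s ^ k * exp ((a + 1) * (t / s)) := by
        rw [add_mul, one_mul, exp_add]
        ring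

namespace SelfDominated

variable {E : Type*} [NormedAddCommGroup E] [NormedSpace ℝ E] {C s : ℝ} {V : E → ℝ}

lemma exp_norm_mul_pow_le {m : ℕ} (hV : SelfDominated m C V) (hs : 0 < s) (hs₁ : s ≤ 1) (v : E)
    (k : ℕ) :
    exp (C * ‖v‖) * ‖v‖ ^ k ≤ k.factorial * s ^ k * exp ((C + 1) * (‖v‖ / s)) :=
  exp_mul_pow_le_mul_exp_div (zero_le_one.trans hV.one_le) hs hs₁ (norm_nonneg v) k

lemma le_mul_exp_div (hV : SelfDominated 1 C V) (hs : 0 < s) (hs₁ : s ≤ 1) (x y : E) :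
    V y ≤ V x * exp ((C + 1) * (‖y - x‖ / s)) := by
  refine (hV.le_mul_exp x y).trans (mul_le_mul_of_nonneg_left ?_ (hV.pos x).le)
  simpa using hV.exp_norm_mul_pow_le hs hs₁ (y - x) 0

lemma abs_sub_le_mul_exp_div (hV : SelfDominated 1 C V) (hs : 0 < s) (hs₁ : s ≤ 1) (x y : E) :
    |V y - V x| ≤ V x * exp ((C + 1) * (‖y - x‖ / s)) := by
  refine (hV.abs_sub_le x y).trans (mul_le_mul_of_nonneg_left ?_ (hV.pos x).le)
  simpa using hV.exp_norm_mul_pow_le hs hs₁ (y - x) 0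

lemma abs_sub_sub_fderiv_le_mul_exp_div (hV : SelfDominated 2 C V) (hs : 0 < s) (hs₁ : s ≤ 1)
    (x y : E) :
    |V y - V x - fderiv ℝ V x (y - x)|
      ≤ 2 * C * s ^ 2 * V x * exp ((C + 1) * (‖y - x‖ / s)) := by
  have hC := hV.one_le
  have hx := hV.pos x
  calc |V y - V x - fderiv ℝ V x (y - x)|
      ≤ C * V x * (exp (C * ‖y - x‖) * ‖y - x‖ ^ 2) :=
        (hV.abs_sub_sub_fderiv_le x y).trans_eq (by ring)
    _ ≤ C * V x * ((2 : ℕ).factorial * s ^ 2 * exp ((C + 1) * (‖y - x‖ / s))) :=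
        mul_le_mul_of_nonneg_left (hV.exp_norm_mul_pow_le hs hs₁ (y - x) 2) (by positivity)
    _ = 2 * C * s ^ 2 * V x * exp ((C + 1) * (‖y - x‖ / s)) := by
        norm_num [Nat.factorial]
        ring

lemma abs_sub_sub_trapezoid_le_mul_exp_div (hV : SelfDominated 3 C V) (hs : 0 < s) (hs₁ : s ≤ 1)
    (x y : E) :
    |V y - V x - (fderiv ℝ V x (y - x) + fderiv ℝ V y (y - x)) / 2|
      ≤ 6 * C * s ^ 3 * V x * exp ((C + 1) * (‖y - x‖ / s)) := by
  have hC := hV.one_le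
  have hx := hV.pos x
  calc |V y - V x - (fderiv ℝ V x (y - x) + fderiv ℝ V y (y - x)) / 2|
      ≤ C * V x * (exp (C * ‖y - x‖) * ‖y - x‖ ^ 3) :=
        (hV.abs_sub_sub_trapezoid_le x y).trans_eq (by ring)
    _ ≤ C * V x * ((3 : ℕ).factorial * s ^ 3 * exp ((C + 1) * (‖y - x‖ / s))) :=
        mul_le_mul_of_nonneg_left (hV.exp_norm_mul_pow_le hs hs₁ (y - x) 3) (by positivity)
    _ = 6 * C * s ^ 3 * V x * exp ((C + 1) * (‖y - x‖ / s)) := by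
        norm_num [Nat.factorial]
        ring

lemma abs_sq_norm_fderiv_sub_le_mul_exp_div (hV : SelfDominated 2 C V) (hs : 0 < s) (hs₁ : s ≤ 1)
    (x y : E) :
    |‖fderiv ℝ V y‖ ^ 2 - ‖fderiv ℝ V x‖ ^ 2|
      ≤ 2 * C ^ 2 * s * V x ^ 2 * exp ((2 * C + 1) * (‖y - x‖ / s)) := by
  have hC := hV.one_le
  have hscale : exp (2 * C * ‖y - x‖) * ‖y - x‖ ≤ s * exp ((2 * C + 1) * (‖y - x‖ / s)) := by
    simpa using exp_mul_pow_le_mul_exp_div (a := 2 * C) (by positivity) hs hs₁ (norm_nonneg _) 1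
  calc |‖fderiv ℝ V y‖ ^ 2 - ‖fderiv ℝ V x‖ ^ 2|
      ≤ 2 * C ^ 2 * V x ^ 2 * (exp (2 * C * ‖y - x‖) * ‖y - x‖) :=
        (hV.abs_sq_norm_fderiv_sub_le x y).trans_eq (by ring)
    _ ≤ 2 * C ^ 2 * V x ^ 2 * (s * exp ((2 * C + 1) * (‖y - x‖ / s))) := by gcongr
    _ = 2 * C ^ 2 * s * V x ^ 2 * exp ((2 * C + 1) * (‖y - x‖ / s)) := by ring

end SelfDominated

end DiffusiveScaling

section Gradient

variable {H : Type*} [NormedAddCommGroup H] [InnerProductSpace ℝ H] [CompleteSpace H]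

lemma norm_gradient_eq_norm_fderiv (f : H → ℝ) (x : H) :
    ‖gradient f x‖ = ‖fderiv ℝ f x‖ := by
  rw [← toDual_gradient, LinearIsometryEquiv.norm_map]

lemma norm_add_smul_gradient_sq (f : H → ℝ) (x v : H) (h : ℝ) :
    ‖v + h • gradient f x‖ ^ 2
      = ‖v‖ ^ 2 + 2 * h * fderiv ℝ f x v + h ^ 2 * ‖fderiv ℝ f x‖ ^ 2 := by
  rw [norm_add_sq_real, norm_smul, inner_smul_right, real_inner_comm, inner_gradient_left, mul_pow,
    norm_eq_abs, sq_abs, norm_gradient_eq_norm_fderiv]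
  ring

lemma fderiv_pow_gradient_nonneg {f : H → ℝ} {x : H} (hf : DifferentiableAt ℝ f x)
    (hfx : 0 ≤ f x) (p : ℕ) :
    0 ≤ fderiv ℝ (fun z => f z ^ p) x (gradient f x) := by
  have hinner : fderiv ℝ f x (gradient f x) = ‖gradient f x‖ ^ 2 := by
    rw [← inner_gradient_left, real_inner_self_eq_norm_sq]
  rw [fderiv_fun_pow p hf]
  simp only [smul_apply, smul_eq_mul, hinner]
  positivity

lemma measurable_gradient [MeasurableSpace H] [BorelSpace H] (f : H → ℝ) :
    Measurable (gradient f) :=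
  (LinearIsometryEquiv.continuous _).measurable.comp (measurable_fderiv ℝ f)

end Gradient

section Acceptance

variable {n : ℕ} {β h : ℝ} {U : Euc n → ℝ}

lemma eulerDensity_pos (hβ : 0 < β) (hh : 0 < h) (U : Euc n → ℝ) (x y : Euc n) :
    0 < eulerDensity n β h U x y := by
  unfold eulerDensity
  positivity

lemma accept_nonneg (hβ : 0 < β) (hh : 0 < h) (U : Euc n → ℝ) (x y : Euc n) :
    0 ≤ accept n β h U x y := by
  have hxy := eulerDensity_pos hβ hh U x y
  have hyx := eulerDensity_pos hβ hh U y x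
  unfold accept
  positivity

lemma accept_eq_min_one_exp (hβ : 0 < β) (hh : 0 < h) (U : Euc n → ℝ) (x y : Euc n) :
    accept n β h U x y = min 1 (exp
      (-(β * (U y - U x - (fderiv ℝ U x (y - x) + fderiv ℝ U y (y - x)) / 2)
        + β * h / 4 * (‖fderiv ℝ U y‖ ^ 2 - ‖fderiv ℝ U x‖ ^ 2)))) := by
  have hA : (4 * π * β⁻¹ * h) ^ (-(n : ℝ) / 2) ≠ 0 := by positivity
  unfold accept eulerDensity
  rw [mul_assoc, mul_assoc (_ ^ _), mul_div_mul_left _ _ hA, ← exp_add, ← exp_add, ← exp_sub,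
    norm_add_smul_gradient_sq, norm_add_smul_gradient_sq, norm_sub_rev x y, ← neg_sub y x, map_neg]
  congr 2
  field_simp
  ring

lemma one_sub_min_one_exp_neg_le_abs (a : ℝ) : 1 - min 1 (exp (-a)) ≤ |a| := by
  have := abs_nonneg a
  rcases min_choice 1 (exp (-a)) with h | h <;> rw [h] <;>
    linarith [add_one_le_exp (-a), le_abs_self a]

/-- The logarithm of the acceptance ratio is the error of the trapezoid rule for `U` along the
segment, plus `h` times an increment of the squared drift: both are of order `√h ^ 3`. -/
lemma one_sub_accept_le {C : ℝ} (hβ : 0 < β) (hh : 0 < h) (hh₁ : h ≤ 1)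
    (hU : SelfDominated 3 C U) (h₁ : ∀ x, 1 ≤ U x) (x y : Euc n) :
    1 - accept n β h U x y
      ≤ 7 * β * C ^ 2 * √h ^ 3 * U x ^ 2 * exp ((2 * C + 1) * (‖y - x‖ / √h)) := by
  have hC := hU.one_le
  have hs : 0 < √h := sqrt_pos.2 hh
  have hs₁ : √h ≤ 1 := sqrt_le_one.2 hh₁
  have hUx : 1 ≤ U x := h₁ x
  set e := exp ((2 * C + 1) * (‖y - x‖ / √h)) with he
  set trapezoidError := U y - U x - (fderiv ℝ U x (y - x) + fderiv ℝ U y (y - x)) / 2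
    with htrap_def
  have htrap : |trapezoidError| ≤ 6 * C ^ 2 * √h ^ 3 * U x ^ 2 * e := by
    refine (hU.abs_sub_sub_trapezoid_le_mul_exp_div hs hs₁ x y).trans ?_
    rw [he]
    gcongr
    · exact le_self_pow₀ hC two_ne_zero
    · exact le_self_pow₀ hUx two_ne_zero
    · linarith
  have hdrift := (hU.mono_order (by norm_num)).abs_sq_norm_fderiv_sub_le_mul_exp_div hs hs₁ x y
  rw [accept_eq_min_one_exp hβ hh, ← htrap_def]
  refine (one_sub_min_one_exp_neg_le_abs _).trans ((abs_add_le _ _).trans ?_)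
  rw [abs_mul, abs_mul, abs_of_pos hβ, abs_of_pos (by positivity : 0 < β * h / 4)]
  calc β * |trapezoidError| + β * h / 4 * |‖fderiv ℝ U y‖ ^ 2 - ‖fderiv ℝ U x‖ ^ 2|
      ≤ β * (6 * C ^ 2 * √h ^ 3 * U x ^ 2 * e)
          + β * √h ^ 2 / 4 * (2 * C ^ 2 * √h * U x ^ 2 * e) := by
        rw [sq_sqrt hh.le]
        gcongr
    _ = 13 / 2 * (β * C ^ 2 * √h ^ 3 * U x ^ 2 * e) := by ring
    _ ≤ 7 * (β * C ^ 2 * √h ^ 3 * U x ^ 2 * e) := by gcongr; norm_num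
    _ = 7 * β * C ^ 2 * √h ^ 3 * U x ^ 2 * e := by ring

end Acceptance

lemma integrable_and_integral_le_of_lintegral_ofReal_le {X : Type*} [MeasurableSpace X]
    {μ : Measure X} {f : X → ℝ} (hf : AEStronglyMeasurable f μ) (hf₀ : 0 ≤ f) {M : ℝ}
    (hM : 0 ≤ M) (h : ∫⁻ x, ENNReal.ofReal (f x) ∂μ ≤ ENNReal.ofReal M) :
    Integrable f μ ∧ ∫ x, f x ∂μ ≤ M := by
  have hint : Integrable f μ := (lintegral_ofReal_ne_top_iff_integrable hf (.of_forall hf₀)).1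
    (ne_top_of_le_ne_top ENNReal.ofReal_ne_top h)
  exact ⟨hint, (ENNReal.ofReal_le_ofReal_iff hM).1
    ((ofReal_integral_eq_lintegral_ofReal hint (.of_forall hf₀)).trans_le h)⟩

section IsotropicGaussian

variable {V : Type*} [NormedAddCommGroup V] [InnerProductSpace ℝ V] {s : ℝ}

/-- Density of the Gaussian law with mean `m` and covariance `s • 1`. -/
def isotropicGaussianPDF (m : V) (s : ℝ) (y : V) : ℝ :=
  (2 * π * s) ^ (-(Module.finrank ℝ V : ℝ) / 2) * exp (-‖y - m‖ ^ 2 / (2 * s))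

lemma isotropicGaussianPDF_nonneg (hs : 0 < s) (m y : V) : 0 ≤ isotropicGaussianPDF m s y := by
  unfold isotropicGaussianPDF
  positivity

lemma continuous_isotropicGaussianPDF (m : V) (s : ℝ) : Continuous (isotropicGaussianPDF m s) := by
  unfold isotropicGaussianPDF
  fun_prop

/-- Completing the square, `l * r ≤ l ^ 2 + r ^ 2 / 4`, absorbs the exponential into the Gaussian
of doubled variance. -/
lemma exp_mul_isotropicGaussianPDF_le (hs : 0 < s) (l : ℝ) (m y : V) :
    isotropicGaussianPDF m s y * exp (l * (‖y - m‖ / √s))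
      ≤ 2 ^ ((Module.finrank ℝ V : ℝ) / 2) * exp (l ^ 2) * isotropicGaussianPDF m (2 * s) y := by
  have hconst : (2 * π * s) ^ (-(Module.finrank ℝ V : ℝ) / 2)
      = 2 ^ ((Module.finrank ℝ V : ℝ) / 2)
        * (2 * π * (2 * s)) ^ (-(Module.finrank ℝ V : ℝ) / 2) := by
    rw [show 2 * π * (2 * s) = 2 * (2 * π * s) by ring, mul_rpow two_pos.le (by positivity),
      ← mul_assoc, ← rpow_add two_pos, neg_div, add_neg_cancel, rpow_zero, one_mul]
  have hsquare : -‖y - m‖ ^ 2 / (2 * s) + l * (‖y - m‖ / √s)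
      ≤ l ^ 2 + -‖y - m‖ ^ 2 / (2 * (2 * s)) := by
    have hr : (‖y - m‖ / √s) ^ 2 = ‖y - m‖ ^ 2 / s := by rw [div_pow, sq_sqrt hs.le]
    have h₁ : -‖y - m‖ ^ 2 / (2 * s) = -(‖y - m‖ / √s) ^ 2 / 2 := by rw [hr]; field_simp
    have h₂ : -‖y - m‖ ^ 2 / (2 * (2 * s)) = -(‖y - m‖ / √s) ^ 2 / 4 := by
      rw [hr]; field_simp; norm_num
    rw [h₁, h₂]
    nlinarith [sq_nonneg (‖y - m‖ / √s / 2 - l)]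
  calc isotropicGaussianPDF m s y * exp (l * (‖y - m‖ / √s))
      = (2 * π * s) ^ (-(Module.finrank ℝ V : ℝ) / 2)
          * exp (-‖y - m‖ ^ 2 / (2 * s) + l * (‖y - m‖ / √s)) := by
        rw [isotropicGaussianPDF, mul_assoc, ← exp_add]
    _ ≤ (2 * π * s) ^ (-(Module.finrank ℝ V : ℝ) / 2)
          * exp (l ^ 2 + -‖y - m‖ ^ 2 / (2 * (2 * s))) := by gcongr
    _ = 2 ^ ((Module.finrank ℝ V : ℝ) / 2) * exp (l ^ 2) * isotropicGaussianPDF m (2 * s) y := by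
        rw [hconst, exp_add, isotropicGaussianPDF]
        ring

variable [FiniteDimensional ℝ V] [MeasurableSpace V] [BorelSpace V]

/-- The Gaussian law with mean `m` and covariance `s • 1`; one forward Euler step has this law. -/
def isotropicGaussian (m : V) (s : ℝ) : Measure V :=
  volume.withDensity fun y => ENNReal.ofReal (isotropicGaussianPDF m s y)

lemma integral_isotropicGaussianPDF (hs : 0 < s) (m : V) :
    ∫ y, isotropicGaussianPDF m s y = 1 := by
  calc ∫ y, isotropicGaussianPDF m s y
      = (2 * π * s) ^ (-(Module.finrank ℝ V : ℝ) / 2)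
          * ∫ v : V, exp (-(1 / (2 * s)) * ‖v‖ ^ 2) := by
        rw [← integral_sub_right_eq_self (fun v : V => exp _) m, ← integral_const_mul]
        simp only [isotropicGaussianPDF, neg_mul, one_div_mul_eq_div, neg_div]
    _ = (2 * π * s) ^ (-(Module.finrank ℝ V : ℝ) / 2)
          * (2 * π * s) ^ ((Module.finrank ℝ V : ℝ) / 2) := by
        rw [GaussianFourier.integral_rexp_neg_mul_sq_norm (by positivity)]
        congr 2
        field_simp
    _ = 1 := by
        rw [← rpow_add (by positivity), neg_div, neg_add_cancel, rpow_zero]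

lemma isProbabilityMeasure_isotropicGaussian (hs : 0 < s) (m : V) :
    IsProbabilityMeasure (isotropicGaussian m s) := by
  have hint : Integrable (isotropicGaussianPDF m s) :=
    .of_integral_ne_zero (integral_isotropicGaussianPDF hs m ▸ one_ne_zero)
  refine ⟨?_⟩
  rw [isotropicGaussian, withDensity_apply _ .univ, setLIntegral_univ,
    ← ofReal_integral_eq_lintegral_ofReal hint (.of_forall (isotropicGaussianPDF_nonneg hs m)),
    integral_isotropicGaussianPDF hs, ENNReal.ofReal_one]

lemma integral_isotropicGaussian_eq_zero_of_odd (hs : 0 < s) (m : V) {g : V → ℝ}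
    (hg : ∀ v, g (-v) = -g v) : ∫ y, g (y - m) ∂isotropicGaussian m s = 0 := by
  have hpdf : ∀ y, isotropicGaussianPDF m s y = isotropicGaussianPDF 0 s (y - m) := fun y => by
    simp only [isotropicGaussianPDF, sub_zero]
  have hodd : ∀ v : V, isotropicGaussianPDF 0 s (-v) * g (-v)
      = -(isotropicGaussianPDF 0 s v * g v) := fun v => by
    simp only [isotropicGaussianPDF, sub_zero, norm_neg, hg, mul_neg]
  rw [isotropicGaussian, integral_withDensity_eq_integral_toReal_smul
    (continuous_isotropicGaussianPDF m s).measurable.ennreal_ofReal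
    (.of_forall fun _ => ENNReal.ofReal_lt_top)]
  simp only [smul_eq_mul, hpdf, ENNReal.toReal_ofReal (isotropicGaussianPDF_nonneg hs (0 : V) _)]
  rw [integral_sub_right_eq_self (fun v => isotropicGaussianPDF 0 s v * g v) m,
    ← self_eq_neg, ← integral_neg]
  simp only [← hodd]
  exact (integral_neg_eq_self _ _).symm

lemma lintegral_exp_norm_isotropicGaussian_le (hs : 0 < s) (l : ℝ) (m : V) :
    ∫⁻ y, ENNReal.ofReal (exp (l * (‖y - m‖ / √s))) ∂isotropicGaussian m s
      ≤ ENNReal.ofReal (2 ^ ((Module.finrank ℝ V : ℝ) / 2) * exp (l ^ 2)) := by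
  have h2s : 0 < 2 * s := by positivity
  have hmass := (isProbabilityMeasure_isotropicGaussian h2s m).measure_univ
  rw [isotropicGaussian, withDensity_apply _ .univ, setLIntegral_univ] at hmass
  rw [isotropicGaussian, lintegral_withDensity_eq_lintegral_mul _
    (continuous_isotropicGaussianPDF m s).measurable.ennreal_ofReal (by fun_prop)]
  calc ∫⁻ y, ENNReal.ofReal (isotropicGaussianPDF m s y)
          * ENNReal.ofReal (exp (l * (‖y - m‖ / √s)))
      ≤ ∫⁻ y, ENNReal.ofReal (2 ^ ((Module.finrank ℝ V : ℝ) / 2) * exp (l ^ 2))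
          * ENNReal.ofReal (isotropicGaussianPDF m (2 * s) y) := by
        refine lintegral_mono fun y => ?_
        rw [← ENNReal.ofReal_mul (isotropicGaussianPDF_nonneg hs m y),
          ← ENNReal.ofReal_mul (by positivity)]
        exact ENNReal.ofReal_le_ofReal (exp_mul_isotropicGaussianPDF_le hs l m y)
    _ = ENNReal.ofReal (2 ^ ((Module.finrank ℝ V : ℝ) / 2) * exp (l ^ 2)) := by
        rw [lintegral_const_mul _
          (continuous_isotropicGaussianPDF m _).measurable.ennreal_ofReal, hmass, mul_one]

lemma integrable_clm_sub_isotropicGaussian (hs : 0 < s) (l : V →L[ℝ] ℝ) (m : V) :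
    Integrable (fun y => l (y - m)) (isotropicGaussian m s) := by
  have : 0 < √s := sqrt_pos.2 hs
  have hexp : Integrable (fun y => exp (1 * (‖y - m‖ / √s))) (isotropicGaussian m s) :=
    (integrable_and_integral_le_of_lintegral_ofReal_le (by fun_prop) (fun _ => exp_nonneg _)
      (by positivity) (lintegral_exp_norm_isotropicGaussian_le hs 1 m)).1
  refine (hexp.const_mul (‖l‖ * √s)).mono' (by fun_prop) (.of_forall fun y => ?_)
  calc ‖l (y - m)‖ ≤ ‖l‖ * ‖y - m‖ := l.le_opNorm _
    _ = ‖l‖ * √s * (1 * (‖y - m‖ / √s)) := by field_simp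
    _ ≤ ‖l‖ * √s * exp (1 * (‖y - m‖ / √s)) := by
        gcongr
        linarith [add_one_le_exp (1 * (‖y - m‖ / √s))]

end IsotropicGaussian

section EulerStep

variable {n : ℕ} {β h : ℝ}

lemma eulerKernel_eq_isotropicGaussian (β h : ℝ) (U : Euc n → ℝ) (x : Euc n) :
    eulerKernel n β h U x = isotropicGaussian (x - h • gradient U x) (2 * β⁻¹ * h) := by
  unfold eulerKernel isotropicGaussian eulerDensity isotropicGaussianPDF
  simp only [finrank_euclideanSpace_fin, sub_sub_eq_add_sub, sub_add_eq_add_sub,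
    show 2 * π * (2 * β⁻¹ * h) = 4 * π * β⁻¹ * h by ring,
    show 2 * (2 * β⁻¹ * h) = 4 * β⁻¹ * h by ring]

lemma isProbabilityMeasure_eulerKernel (hβ : 0 < β) (hh : 0 < h) (U : Euc n → ℝ) (x : Euc n) :
    IsProbabilityMeasure (eulerKernel n β h U x) := by
  rw [eulerKernel_eq_isotropicGaussian]
  exact isProbabilityMeasure_isotropicGaussian (by positivity) _

lemma lintegral_exp_norm_sub_eulerKernel_le {U : Euc n → ℝ} {x : Euc n} {B l : ℝ} (hβ : 0 < β)
    (hh : 0 < h) (hl : 0 ≤ l) (hB : ‖h • gradient U x‖ ≤ B * √h) :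
    ∫⁻ y, ENNReal.ofReal (exp (l * (‖y - x‖ / √h))) ∂eulerKernel n β h U x
      ≤ ENNReal.ofReal (exp (l * B) * (2 ^ ((n : ℝ) / 2) * exp (l ^ 2 * (2 * β⁻¹)))) := by
  have : 0 < √h := sqrt_pos.2 hh
  have hσ : √(2 * β⁻¹ * h) = √(2 * β⁻¹) * √h := sqrt_mul (by positivity) h
  have : √(2 * β⁻¹) ≠ 0 := by positivity
  set m := x - h • gradient U x with hm
  have hexp : ∀ y, exp (l * (‖y - x‖ / √h))
      ≤ exp (l * B) * exp (l * √(2 * β⁻¹) * (‖y - m‖ / √(2 * β⁻¹ * h))) := fun y => by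
    have hnorm : ‖y - x‖ ≤ B * √h + ‖y - m‖ := by
      calc ‖y - x‖ = ‖(y - m) - h • gradient U x‖ := by rw [hm]; congr 1; abel
        _ ≤ B * √h + ‖y - m‖ := by linarith [norm_sub_le (y - m) (h • gradient U x)]
    rw [← exp_add, exp_le_exp, hσ]
    calc l * (‖y - x‖ / √h) ≤ l * ((B * √h + ‖y - m‖) / √h) := by gcongr
      _ = l * B + l * √(2 * β⁻¹) * (‖y - m‖ / (√(2 * β⁻¹) * √h)) := by field_simp
  rw [eulerKernel_eq_isotropicGaussian, ← hm]
  calc ∫⁻ y, ENNReal.ofReal (exp (l * (‖y - x‖ / √h))) ∂isotropicGaussian m (2 * β⁻¹ * h)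
      ≤ ∫⁻ y, ENNReal.ofReal (exp (l * B)) * ENNReal.ofReal
          (exp (l * √(2 * β⁻¹) * (‖y - m‖ / √(2 * β⁻¹ * h)))) ∂isotropicGaussian m (2 * β⁻¹ * h) :=
        lintegral_mono fun y => by
          rw [← ENNReal.ofReal_mul (exp_nonneg _)]
          exact ENNReal.ofReal_le_ofReal (hexp y)
    _ ≤ ENNReal.ofReal (exp (l * B)) * ENNReal.ofReal (2 ^ ((n : ℝ) / 2)
          * exp ((l * √(2 * β⁻¹)) ^ 2)) := by
        rw [lintegral_const_mul _ (by fun_prop)]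
        gcongr
        simpa only [finrank_euclideanSpace_fin] using lintegral_exp_norm_isotropicGaussian_le
          (by positivity : 0 < 2 * β⁻¹ * h) (l * √(2 * β⁻¹)) m
    _ = ENNReal.ofReal (exp (l * B) * (2 ^ ((n : ℝ) / 2) * exp (l ^ 2 * (2 * β⁻¹)))) := by
        rw [← ENNReal.ofReal_mul (exp_nonneg _), mul_pow, sq_sqrt (by positivity)]

lemma integrable_clm_sub_eulerKernel (hβ : 0 < β) (hh : 0 < h) (U : Euc n → ℝ) (x : Euc n)
    (l : Euc n →L[ℝ] ℝ) : Integrable (fun y => l (y - x)) (eulerKernel n β h U x) := by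
  have := isProbabilityMeasure_eulerKernel hβ hh U x
  have hs : 0 < 2 * β⁻¹ * h := by positivity
  rw [eulerKernel_eq_isotropicGaussian] at this ⊢
  refine ((integrable_clm_sub_isotropicGaussian hs l (x - h • gradient U x)).sub
    (integrable_const (l (h • gradient U x)))).congr (.of_forall fun y => ?_)
  simp only [Pi.sub_apply, map_sub]
  ring

lemma integral_clm_sub_eulerKernel (hβ : 0 < β) (hh : 0 < h) (U : Euc n → ℝ) (x : Euc n)
    (l : Euc n →L[ℝ] ℝ) :
    ∫ y, l (y - x) ∂eulerKernel n β h U x = -(h * l (gradient U x)) := by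
  have := isProbabilityMeasure_eulerKernel hβ hh U x
  have hs : 0 < 2 * β⁻¹ * h := by positivity
  have hsplit (y : Euc n) :
      l (y - x) = l (y - (x - h • gradient U x)) - h * l (gradient U x) := by
    simp only [map_sub, map_smul, smul_eq_mul]
    ring
  rw [eulerKernel_eq_isotropicGaussian] at this ⊢
  simp only [hsplit]
  rw [integral_sub (integrable_clm_sub_isotropicGaussian hs l _) (integrable_const _),
    integral_isotropicGaussian_eq_zero_of_odd hs _ fun v => map_neg l v, integral_const,
    probReal_univ, one_smul, zero_sub]

end EulerStep

section PatchedKernel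

variable {n : ℕ} {β h Estar : ℝ} {U : Euc n → ℝ}

lemma measurable_eulerDensity (β h : ℝ) (U : Euc n → ℝ) :
    Measurable fun z : Euc n × Euc n => eulerDensity n β h U z.1 z.2 := by
  have := measurable_gradient U
  unfold eulerDensity
  fun_prop

lemma measurable_accept (β h : ℝ) (hU : Measurable U) :
    Measurable fun z : Euc n × Euc n => accept n β h U z.1 z.2 := by
  have hq := measurable_eulerDensity β h U
  have hq' := hq.comp measurable_swap
  exact measurable_const.min
    ((hq'.mul (by fun_prop : Measurable fun z : Euc n × Euc n => exp (-β * U z.2))).div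
      (hq.mul (by fun_prop : Measurable fun z : Euc n × Euc n => exp (-β * U z.1))))

lemma measurable_acceptBar (β h Estar : ℝ) (hU : Measurable U) :
    Measurable fun z : Euc n × Euc n => acceptBar n β h Estar U z.1 z.2 := by
  have hR : MeasurableSet (Rset n h Estar U) := measurableSet_lt hU measurable_const
  exact Measurable.ite ((measurable_fst hR).inter (measurable_snd hR)) (measurable_accept β h hU)
    measurable_const

lemma acceptBar_nonneg (hβ : 0 < β) (hh : 0 < h) (U : Euc n → ℝ) (x y : Euc n) :
    0 ≤ acceptBar n β h Estar U x y := by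
  unfold acceptBar
  split_ifs
  exacts [accept_nonneg hβ hh U x y, le_rfl]

lemma acceptBar_le_one (β h Estar : ℝ) (U : Euc n → ℝ) (x y : Euc n) :
    acceptBar n β h Estar U x y ≤ 1 := by
  unfold acceptBar
  split_ifs
  exacts [min_le_left _ _, zero_le_one]

lemma measurable_withDensity_uncurry {X Y : Type*} [MeasurableSpace X] [MeasurableSpace Y]
    {μ : Measure Y} [SFinite μ] {f : X → Y → ℝ≥0∞} (hf : Measurable (Function.uncurry f)) :
    Measurable fun x => μ.withDensity (f x) := by
  refine Measure.measurable_of_measurable_coe _ fun A hA => ?_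
  simp_rw [withDensity_apply _ hA]
  exact hf.lintegral_prod_right'

lemma measurable_eulerKernel (β h : ℝ) (U : Euc n → ℝ) : Measurable (eulerKernel n β h U) :=
  measurable_withDensity_uncurry (measurable_eulerDensity β h U).ennreal_ofReal

lemma measurable_patchedKernel (β h Estar : ℝ) (hU : Measurable U) :
    Measurable (patchedKernel n β h Estar U) := by
  have hdens : Measurable (Function.uncurry fun x y =>
      ENNReal.ofReal (acceptBar n β h Estar U x y * eulerDensity n β h U x y)) :=
    ((measurable_acceptBar β h Estar hU).mul (measurable_eulerDensity β h U)).ennreal_ofReal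
  refine Measure.measurable_of_measurable_coe _ fun A hA => ?_
  simp only [patchedKernel, Measure.add_apply, Measure.smul_apply, smul_eq_mul]
  have hmove := (Measure.measurable_coe hA).comp
    (measurable_withDensity_uncurry (μ := volume) hdens)
  have hmass := hdens.lintegral_prod_right' (ν := (volume : Measure (Euc n)))
  exact hmove.add ((measurable_const.sub hmass).mul
    ((Measure.measurable_coe hA).comp Measure.measurable_dirac))

lemma measurable_acceptBar_right (β h Estar : ℝ) (hU : Measurable U) (x : Euc n) :
    Measurable (acceptBar n β h Estar U x) :=
  (measurable_acceptBar β h Estar hU).comp measurable_prodMk_left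

lemma withDensity_acceptBar_mul_eulerDensity (hβ : 0 < β) (hh : 0 < h) (hU : Measurable U)
    (x : Euc n) :
    (volume.withDensity fun y =>
        ENNReal.ofReal (acceptBar n β h Estar U x y * eulerDensity n β h U x y))
      = (eulerKernel n β h U x).withDensity
          fun y => ENNReal.ofReal (acceptBar n β h Estar U x y) := by
  have hq : Measurable fun y => ENNReal.ofReal (eulerDensity n β h U x y) :=
    ((measurable_eulerDensity β h U).comp measurable_prodMk_left).ennreal_ofReal
  have hα := (measurable_acceptBar_right β h Estar hU x).ennreal_ofReal
  rw [eulerKernel, ← withDensity_mul _ hq hα]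
  simp only [ENNReal.ofReal_mul (acceptBar_nonneg hβ hh U x _), Pi.mul_def, mul_comm]

lemma lintegral_one_sub_acceptBar (hβ : 0 < β) (hh : 0 < h) (hU : Measurable U) (x : Euc n) :
    ∫⁻ y, ENNReal.ofReal (1 - acceptBar n β h Estar U x y) ∂eulerKernel n β h U x
      = 1 - ∫⁻ y, ENNReal.ofReal (acceptBar n β h Estar U x y) ∂eulerKernel n β h U x := by
  have := isProbabilityMeasure_eulerKernel hβ hh U x
  have hle (y : Euc n) : ENNReal.ofReal (acceptBar n β h Estar U x y) ≤ 1 :=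
    ENNReal.ofReal_le_one.2 (acceptBar_le_one β h Estar U x y)
  have hfin : ∫⁻ y, ENNReal.ofReal (acceptBar n β h Estar U x y) ∂eulerKernel n β h U x ≠ ∞ :=
    ne_top_of_le_ne_top ENNReal.one_ne_top
      ((lintegral_mono hle).trans_eq (by rw [lintegral_one, measure_univ]))
  simp only [ENNReal.ofReal_sub _ (acceptBar_nonneg hβ hh U x _), ENNReal.ofReal_one]
  rw [lintegral_sub (measurable_acceptBar_right β h Estar hU x).ennreal_ofReal hfin
    (.of_forall hle), lintegral_one, measure_univ]

lemma lintegral_patchedKernel (hβ : 0 < β) (hh : 0 < h) (hU : Measurable U) (x : Euc n)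
    {f : Euc n → ℝ≥0∞} (hf : Measurable f) :
    ∫⁻ y, f y ∂patchedKernel n β h Estar U x
      = ∫⁻ y, (ENNReal.ofReal (acceptBar n β h Estar U x y) * f y
          + ENNReal.ofReal (1 - acceptBar n β h Estar U x y) * f x) ∂eulerKernel n β h U x := by
  have hα := measurable_acceptBar_right β h Estar hU x
  have hdens := withDensity_acceptBar_mul_eulerDensity (Estar := Estar) hβ hh hU x
  have hmass : ∫⁻ y, ENNReal.ofReal (acceptBar n β h Estar U x y * eulerDensity n β h U x y)
      = ∫⁻ y, ENNReal.ofReal (acceptBar n β h Estar U x y) ∂eulerKernel n β h U x := by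
    simpa only [withDensity_apply _ MeasurableSet.univ, setLIntegral_univ] using
      congrArg (fun μ : Measure (Euc n) => μ Set.univ) hdens
  have hmove : Measurable fun y => ENNReal.ofReal (acceptBar n β h Estar U x y) * f y :=
    hα.ennreal_ofReal.mul hf
  rw [lintegral_add_left hmove, lintegral_mul_const _ (by fun_prop),
    lintegral_one_sub_acceptBar hβ hh hU, patchedKernel, lintegral_add_measure,
    lintegral_smul_measure, lintegral_dirac' _ hf, hmass, hdens,
    lintegral_withDensity_eq_lintegral_mul _ hα.ennreal_ofReal hf, smul_eq_mul]
  simp only [Pi.mul_apply]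

lemma isProbabilityMeasure_patchedKernel (hβ : 0 < β) (hh : 0 < h) (hU : Measurable U)
    (x : Euc n) : IsProbabilityMeasure (patchedKernel n β h Estar U x) := by
  have := isProbabilityMeasure_eulerKernel hβ hh U x
  refine ⟨?_⟩
  rw [← lintegral_one, lintegral_patchedKernel hβ hh hU x measurable_const]
  simp only [mul_one, ← ENNReal.ofReal_add (acceptBar_nonneg hβ hh U x _)
    (sub_nonneg.2 (acceptBar_le_one β h Estar U x _)), add_sub_cancel, ENNReal.ofReal_one,
    lintegral_one, measure_univ]

/-- The probability that the patched chain at `x` rejects its Euler proposal. -/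
def rejectionProb (n : ℕ) (β h Estar : ℝ) (U : Euc n → ℝ) (x : Euc n) : ℝ≥0∞ :=
  ∫⁻ y, ENNReal.ofReal (1 - acceptBar n β h Estar U x y) ∂eulerKernel n β h U x

lemma lintegral_patchedKernel_le_add_rejectionProb (hβ : 0 < β) (hh : 0 < h) (hU : Measurable U)
    (x : Euc n) {f : Euc n → ℝ≥0∞} (hf : Measurable f) (hf₁ : ∀ y, f y ≤ 1) :
    ∫⁻ y, f y ∂patchedKernel n β h Estar U x
      ≤ ∫⁻ y, f y ∂eulerKernel n β h U x + rejectionProb n β h Estar U x := by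
  rw [lintegral_patchedKernel hβ hh hU x hf, rejectionProb, ← lintegral_add_left hf]
  gcongr with y
  · exact mul_le_of_le_one_left'
      (ENNReal.ofReal_le_one.2 (acceptBar_le_one β h Estar U x y))
  · exact mul_le_of_le_one_right' (hf₁ x)

lemma rejectionProb_le_one (hβ : 0 < β) (hh : 0 < h) (U : Euc n → ℝ) (x : Euc n) :
    rejectionProb n β h Estar U x ≤ 1 := by
  have := isProbabilityMeasure_eulerKernel hβ hh U x
  refine (lintegral_mono fun y => ENNReal.ofReal_le_one.2 ?_).trans_eq
    (by rw [lintegral_one, measure_univ])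
  linarith [acceptBar_nonneg (Estar := Estar) hβ hh U x y]

end PatchedKernel

section TypicalRegion

variable {n : ℕ} {β h C Estar : ℝ} {U : Euc n → ℝ} {x : Euc n}

lemma rpow_neg_quarter_pow_four (hh : 0 < h) : (h ^ (-(1 : ℝ) / 4)) ^ 4 = h⁻¹ := by
  rw [← rpow_natCast, ← rpow_mul hh.le, Nat.cast_ofNat, div_mul_cancel₀ _ four_ne_zero,
    rpow_neg_one]

lemma sqrt_mul_sq_le_of_mem_Rset (hh : 0 < h) (hUx : 0 ≤ U x) (hx : x ∈ Rset n h Estar U) :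
    √h * U x ^ 2 ≤ Estar ^ 2 := by
  rw [← pow_le_pow_iff_left₀ (by positivity) (by positivity) two_ne_zero]
  calc (√h * U x ^ 2) ^ 2 = h * U x ^ 4 := by rw [mul_pow, sq_sqrt hh.le, ← pow_mul]
    _ ≤ h * (Estar * h ^ (-(1 : ℝ) / 4)) ^ 4 := by gcongr; exact hx.le
    _ = (Estar ^ 2) ^ 2 := by
        rw [mul_pow, rpow_neg_quarter_pow_four hh]
        field_simp

lemma one_le_of_notMem_Rset (hh : 0 < h) (hE : 0 < Estar) (hx : x ∉ Rset n h Estar U) :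
    1 ≤ h ^ 3 * (U x / Estar) ^ 12 := by
  have hle : h ^ (-(1 : ℝ) / 4) ≤ U x / Estar := (le_div_iff₀' hE).2 (not_lt.1 hx)
  calc 1 = h ^ 3 * ((h ^ (-(1 : ℝ) / 4)) ^ 4) ^ 3 := by
        rw [rpow_neg_quarter_pow_four hh, inv_pow, mul_inv_cancel₀ (by positivity)]
    _ = h ^ 3 * (h ^ (-(1 : ℝ) / 4)) ^ 12 := by rw [← pow_mul]
    _ ≤ h ^ 3 * (U x / Estar) ^ 12 := by gcongr

lemma norm_smul_gradient_le_of_mem_Rset (hh : 0 < h) (hU : SelfDominated 1 C U) (h₁ : 1 ≤ U x)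
    (hx : x ∈ Rset n h Estar U) : ‖h • gradient U x‖ ≤ C * Estar ^ 2 * √h := by
  have hC := hU.one_le
  calc ‖h • gradient U x‖ = h * ‖fderiv ℝ U x‖ := by
        rw [norm_smul, norm_of_nonneg hh.le, norm_gradient_eq_norm_fderiv]
    _ ≤ h * (C * U x ^ 2) := by
        gcongr
        exact (hU.norm_fderiv_le x).trans (by gcongr; exact le_self_pow₀ h₁ two_ne_zero)
    _ = C * (√h * U x ^ 2) * √h := by
        nth_rewrite 1 [← mul_self_sqrt hh.le]
        ring
    _ ≤ C * Estar ^ 2 * √h := by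
        gcongr
        exact sqrt_mul_sq_le_of_mem_Rset hh (zero_le_one.trans h₁) hx

lemma exists_lintegral_exp_eulerKernel_le (hβ : 0 < β) (hU : SelfDominated 1 C U)
    (h₁ : ∀ x, 1 ≤ U x) (Estar : ℝ) {l : ℝ} (hl : 0 ≤ l) :
    ∃ M > 0, ∀ h, 0 < h → ∀ x ∈ Rset n h Estar U,
      ∫⁻ y, ENNReal.ofReal (exp (l * (‖y - x‖ / √h))) ∂eulerKernel n β h U x
        ≤ ENNReal.ofReal M :=
  ⟨exp (l * (C * Estar ^ 2)) * (2 ^ ((n : ℝ) / 2) * exp (l ^ 2 * (2 * β⁻¹))), by positivity,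
    fun _ hh x hx => lintegral_exp_norm_sub_eulerKernel_le hβ hh hl
      (norm_smul_gradient_le_of_mem_Rset hh hU (h₁ x) hx)⟩

lemma one_sub_acceptBar_le (hβ : 0 < β) (hE : 0 < Estar) (hh : 0 < h) (hh₁ : h ≤ 1)
    (hU : SelfDominated 3 C U) (h₁ : ∀ x, 1 ≤ U x) (hx : x ∈ Rset n h Estar U) (y : Euc n) :
    1 - acceptBar n β h Estar U x y
      ≤ (7 * β * C ^ 2 + Estar⁻¹ ^ 12) * (√h ^ 3 * U x ^ 3 + h ^ 3 * U x ^ 12)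
        * exp (12 * (C + 1) * (‖y - x‖ / √h)) := by
  have hC := hU.one_le
  have hUx := h₁ x
  set e := exp (12 * (C + 1) * (‖y - x‖ / √h)) with he
  have hsmall : 7 * β * C ^ 2 * (√h ^ 3 * U x ^ 3) * e + Estar⁻¹ ^ 12 * (h ^ 3 * U x ^ 12) * e
      ≤ (7 * β * C ^ 2 + Estar⁻¹ ^ 12) * (√h ^ 3 * U x ^ 3 + h ^ 3 * U x ^ 12) * e := by
    rw [← add_mul]
    gcongr
    have : 0 ≤ 7 * β * C ^ 2 * (h ^ 3 * U x ^ 12) := by positivity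
    have : 0 ≤ Estar⁻¹ ^ 12 * (√h ^ 3 * U x ^ 3) := by positivity
    linarith
  refine le_trans ?_ hsmall
  by_cases hy : y ∈ Rset n h Estar U
  · rw [acceptBar, if_pos ⟨hx, hy⟩]
    calc 1 - accept n β h U x y
        ≤ 7 * β * C ^ 2 * √h ^ 3 * U x ^ 2 * exp ((2 * C + 1) * (‖y - x‖ / √h)) :=
          one_sub_accept_le hβ hh hh₁ hU h₁ x y
      _ ≤ 7 * β * C ^ 2 * √h ^ 3 * U x ^ 3 * e := by
          rw [he]
          gcongr
          · norm_num
          · linarith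
      _ = 7 * β * C ^ 2 * (√h ^ 3 * U x ^ 3) * e := by ring
      _ ≤ _ := le_add_of_nonneg_right (by positivity)
  · rw [acceptBar, if_neg fun h => hy h.2, sub_zero]
    have hUy : 0 ≤ U y := (hU.pos y).le
    have hgrowth :=
      (hU.mono_order (by norm_num)).le_mul_exp_div (sqrt_pos.2 hh) (sqrt_le_one.2 hh₁) x y
    calc 1 ≤ h ^ 3 * (U y / Estar) ^ 12 := one_le_of_notMem_Rset hh hE hy
      _ ≤ h ^ 3 * (U x * exp ((C + 1) * (‖y - x‖ / √h)) / Estar) ^ 12 := by gcongr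
      _ = Estar⁻¹ ^ 12 * (h ^ 3 * U x ^ 12) * e := by
          rw [he, mul_assoc 12, div_eq_mul_inv, mul_pow, mul_pow, ← exp_nat_mul, Nat.cast_ofNat]
          ring
      _ ≤ _ := le_add_of_nonneg_left (by positivity)

lemma exists_rejectionProb_le (hβ : 0 < β) (hE : 0 < Estar) (hU : SelfDominated 3 C U)
    (h₁ : ∀ x, 1 ≤ U x) :
    ∃ K > 0, ∀ h, 0 < h → h ≤ 1 → ∀ x, rejectionProb n β h Estar U x
      ≤ ENNReal.ofReal (K * (√h ^ 3 * U x ^ 3 + h ^ 3 * U x ^ 12)) := by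
  have hC := hU.one_le
  obtain ⟨M, hM, hmoment⟩ := exists_lintegral_exp_eulerKernel_le hβ (hU.mono_order (by norm_num))
    h₁ Estar (l := 12 * (C + 1)) (by positivity)
  refine ⟨(7 * β * C ^ 2 + Estar⁻¹ ^ 12) * (M + 1), by positivity, fun h hh hh₁ x => ?_⟩
  have hUx := h₁ x
  set K₀ := 7 * β * C ^ 2 + Estar⁻¹ ^ 12 with hK₀
  set b := √h ^ 3 * U x ^ 3 + h ^ 3 * U x ^ 12 with hb
  have hK₀b : 0 ≤ K₀ * b := by positivity
  by_cases hx : x ∈ Rset n h Estar U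
  · calc rejectionProb n β h Estar U x
        ≤ ∫⁻ y, ENNReal.ofReal (K₀ * b) * ENNReal.ofReal (exp (12 * (C + 1) * (‖y - x‖ / √h)))
            ∂eulerKernel n β h U x := by
          refine lintegral_mono fun y => ?_
          rw [← ENNReal.ofReal_mul hK₀b]
          exact ENNReal.ofReal_le_ofReal (one_sub_acceptBar_le hβ hE hh hh₁ hU h₁ hx y)
      _ ≤ ENNReal.ofReal (K₀ * b) * ENNReal.ofReal M := by
          rw [lintegral_const_mul _ (by fun_prop)]
          gcongr
          exact hmoment h hh x hx
      _ ≤ ENNReal.ofReal (K₀ * (M + 1) * b) := by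
          rw [← ENNReal.ofReal_mul hK₀b]
          exact ENNReal.ofReal_le_ofReal (by linarith)
  · refine (rejectionProb_le_one hβ hh U x).trans (ENNReal.one_le_ofReal.2 ?_)
    calc 1 ≤ h ^ 3 * (U x / Estar) ^ 12 := one_le_of_notMem_Rset hh hE hx
      _ = Estar⁻¹ ^ 12 * 1 * (h ^ 3 * U x ^ 12) := by ring
      _ ≤ K₀ * (M + 1) * b := by
          rw [hK₀, hb]
          gcongr
          · linarith [show 0 ≤ 7 * β * C ^ 2 by positivity]
          · linarith
          · linarith [show 0 ≤ √h ^ 3 * U x ^ 3 by positivity]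

end TypicalRegion

section Lyapunov

variable {n : ℕ} {β h C Estar : ℝ} {U : Euc n → ℝ} {x : Euc n}

lemma one_sub_accept_mul_abs_sub_le (hβ : 0 < β) (hh : 0 < h) (hh₁ : h ≤ 1)
    (hU : SelfDominated 3 C U) (h₁ : ∀ x, 1 ≤ U x) (hx : x ∈ Rset n h Estar U)
    {A : ℝ} {V : Euc n → ℝ} (hV : SelfDominated 1 A V) (y : Euc n) :
    (1 - accept n β h U x y) * |V y - V x|
      ≤ 7 * β * C ^ 2 * Estar ^ 2 * h * V x * exp ((2 * C + A + 2) * (‖y - x‖ / √h)) := by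
  have hVx := hV.pos x
  have hexp : exp ((2 * C + A + 2) * (‖y - x‖ / √h))
      = exp ((2 * C + 1) * (‖y - x‖ / √h)) * exp ((A + 1) * (‖y - x‖ / √h)) := by
    rw [← exp_add, ← add_mul]
    ring_nf
  calc (1 - accept n β h U x y) * |V y - V x|
      ≤ (7 * β * C ^ 2 * √h ^ 3 * U x ^ 2 * exp ((2 * C + 1) * (‖y - x‖ / √h)))
          * (V x * exp ((A + 1) * (‖y - x‖ / √h))) := by
        gcongr
        · exact one_sub_accept_le hβ hh hh₁ hU h₁ x y
        · exact hV.abs_sub_le_mul_exp_div (sqrt_pos.2 hh) (sqrt_le_one.2 hh₁) x y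
    _ = 7 * β * C ^ 2 * (√h * U x ^ 2) * √h ^ 2 * V x
          * exp ((2 * C + A + 2) * (‖y - x‖ / √h)) := by
        rw [hexp]
        ring
    _ ≤ 7 * β * C ^ 2 * Estar ^ 2 * h * V x * exp ((2 * C + A + 2) * (‖y - x‖ / √h)) := by
        rw [sq_sqrt hh.le]
        gcongr
        exact sqrt_mul_sq_le_of_mem_Rset hh (hU.pos x).le hx

/-- Proposals leaving `R_h` increase `U`, so that refusing them only helps. -/
lemma acceptBar_mul_pow_sub_pow_le (hβ : 0 < β) (hh : 0 < h) (hh₁ : h ≤ 1)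
    (hU : SelfDominated 3 C U) (h₁ : ∀ x, 1 ≤ U x) (hx : x ∈ Rset n h Estar U) {p : ℕ}
    {A : ℝ} (hV : SelfDominated 2 A fun z => U z ^ p) (y : Euc n) :
    acceptBar n β h Estar U x y * (U y ^ p - U x ^ p)
      ≤ fderiv ℝ (fun z => U z ^ p) x (y - x)
        + (2 * A + 7 * β * C ^ 2 * Estar ^ 2) * h * U x ^ p
          * exp ((2 * C + A + 2) * (‖y - x‖ / √h)) := by
  have hC := hU.one_le
  have hA := hV.one_le
  have hUx := hU.pos x
  set e := exp ((2 * C + A + 2) * (‖y - x‖ / √h)) with he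
  have hTaylor : U y ^ p - U x ^ p - fderiv ℝ (fun z => U z ^ p) x (y - x)
      ≤ 2 * A * h * U x ^ p * e := by
    refine (le_abs_self _).trans ((hV.abs_sub_sub_fderiv_le_mul_exp_div (sqrt_pos.2 hh)
      (sqrt_le_one.2 hh₁) x y).trans ?_)
    rw [sq_sqrt hh.le, he]
    gcongr
    · linarith
    · exact one_le_two
  by_cases hy : y ∈ Rset n h Estar U
  · rw [acceptBar, if_pos ⟨hx, hy⟩]
    have hrej : (1 - accept n β h U x y) * |U y ^ p - U x ^ p|
        ≤ 7 * β * C ^ 2 * Estar ^ 2 * h * U x ^ p * e :=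
      one_sub_accept_mul_abs_sub_le hβ hh hh₁ hU h₁ hx (hV.mono_order one_le_two) y
    have haccept : accept n β h U x y ≤ 1 := min_le_left _ _
    have hneg := mul_le_mul_of_nonneg_left (neg_abs_le (U y ^ p - U x ^ p))
      (sub_nonneg.2 haccept)
    linarith
  · rw [acceptBar, if_neg fun h => hy h.2, zero_mul]
    have hincrease : U x ^ p ≤ U y ^ p := by
      gcongr
      exact (hx.trans_le (not_lt.1 hy)).le
    have hremainder : 0 ≤ 7 * β * C ^ 2 * Estar ^ 2 * h * U x ^ p * e := by positivity
    linarith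

lemma lintegral_eulerKernel_le_of_le_linear_add_exp (hβ : 0 < β) (hh : 0 < h)
    {l : Euc n →L[ℝ] ℝ} (hl : 0 ≤ l (gradient U x)) {a b c M : ℝ} (hb : 0 ≤ b) (hM : 0 ≤ M)
    (hmoment : ∫⁻ y, ENNReal.ofReal (exp (c * (‖y - x‖ / √h))) ∂eulerKernel n β h U x
      ≤ ENNReal.ofReal M)
    {g : Euc n → ℝ} (hg₀ : ∀ y, 0 ≤ g y)
    (hg : ∀ y, g y ≤ a + (l (y - x) + b * exp (c * (‖y - x‖ / √h)))) :
    ∫⁻ y, ENNReal.ofReal (g y) ∂eulerKernel n β h U x ≤ ENNReal.ofReal (a + b * M) := by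
  have := isProbabilityMeasure_eulerKernel hβ hh U x
  obtain ⟨hexp, hmean⟩ := integrable_and_integral_le_of_lintegral_ofReal_le (by fun_prop)
    (fun _ => exp_nonneg _) hM hmoment
  have hlin := integrable_clm_sub_eulerKernel hβ hh U x l
  have hrest : Integrable (fun y => l (y - x) + b * exp (c * (‖y - x‖ / √h)))
      (eulerKernel n β h U x) := hlin.add (hexp.const_mul b)
  have hbound : Integrable (fun y => a + (l (y - x) + b * exp (c * (‖y - x‖ / √h))))
      (eulerKernel n β h U x) := (integrable_const a).add hrest
  have hintegral : ∫ y, (a + (l (y - x) + b * exp (c * (‖y - x‖ / √h)))) ∂eulerKernel n β h U x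
      = a + (-(h * l (gradient U x))
          + b * ∫ y, exp (c * (‖y - x‖ / √h)) ∂eulerKernel n β h U x) := by
    rw [integral_add (integrable_const a) hrest, integral_add hlin (hexp.const_mul b),
      integral_clm_sub_eulerKernel hβ hh, integral_const_mul, integral_const, probReal_univ,
      one_smul]
  calc ∫⁻ y, ENNReal.ofReal (g y) ∂eulerKernel n β h U x
      ≤ ∫⁻ y, ENNReal.ofReal (a + (l (y - x) + b * exp (c * (‖y - x‖ / √h))))
          ∂eulerKernel n β h U x := lintegral_mono fun y => ENNReal.ofReal_le_ofReal (hg y)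
    _ = ENNReal.ofReal (a + (-(h * l (gradient U x))
          + b * ∫ y, exp (c * (‖y - x‖ / √h)) ∂eulerKernel n β h U x)) := by
        rw [← hintegral, ofReal_integral_eq_lintegral_ofReal hbound
          (.of_forall fun y => (hg₀ y).trans (hg y))]
    _ ≤ ENNReal.ofReal (a + b * M) := by
        refine ENNReal.ofReal_le_ofReal ?_
        have hdrift : 0 ≤ h * l (gradient U x) := by positivity
        have hmean_mul := mul_le_mul_of_nonneg_left hmean hb
        linarith

lemma lintegral_ofReal_patchedKernel (hβ : 0 < β) (hh : 0 < h) (hU : Measurable U) (x : Euc n)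
    {V : Euc n → ℝ} (hV : Measurable V) (hV₀ : ∀ y, 0 ≤ V y) :
    ∫⁻ y, ENNReal.ofReal (V y) ∂patchedKernel n β h Estar U x
      = ∫⁻ y, ENNReal.ofReal (V x + acceptBar n β h Estar U x y * (V y - V x))
          ∂eulerKernel n β h U x := by
  rw [lintegral_patchedKernel hβ hh hU x hV.ennreal_ofReal]
  refine lintegral_congr fun y => ?_
  have hα := acceptBar_nonneg (Estar := Estar) hβ hh U x y
  have hα' := sub_nonneg.2 (acceptBar_le_one β h Estar U x y)
  rw [← ENNReal.ofReal_mul hα, ← ENNReal.ofReal_mul hα', ← ENNReal.ofReal_add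
    (mul_nonneg hα (hV₀ y)) (mul_nonneg hα' (hV₀ x))]
  ring_nf

lemma exists_lintegral_pow_patchedKernel_le (hβ : 0 < β) (hU : SelfDominated 3 C U)
    (h₁ : ∀ x, 1 ≤ U x) (Estar : ℝ) (p : ℕ) :
    ∃ K > 0, ∀ h, 0 < h → h ≤ 1 → ∀ x,
      ∫⁻ y, ENNReal.ofReal (U y ^ p) ∂patchedKernel n β h Estar U x
        ≤ ENNReal.ofReal (1 + K * h) * ENNReal.ofReal (U x ^ p) := by
  obtain ⟨A, hV⟩ : ∃ A, SelfDominated 2 A fun z => U z ^ p :=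
    ⟨_, (hU.mono_order (by norm_num)).pow p⟩
  have hC := hU.one_le
  have hA := hV.one_le
  obtain ⟨M, hM, hmoment⟩ := exists_lintegral_exp_eulerKernel_le hβ (hU.mono_order (by norm_num))
    h₁ Estar (l := 2 * C + A + 2) (by positivity)
  refine ⟨(2 * A + 7 * β * C ^ 2 * Estar ^ 2) * M, by positivity, fun h hh hh₁ x => ?_⟩
  have hpow (y : Euc n) : 0 ≤ U y ^ p := (hV.pos y).le
  have hUm := hU.contDiff.continuous.measurable
  rw [lintegral_ofReal_patchedKernel hβ hh hUm x (hUm.pow_const p) hpow,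
    ← ENNReal.ofReal_mul (by positivity)]
  set K₀ := 2 * A + 7 * β * C ^ 2 * Estar ^ 2
  by_cases hx : x ∈ Rset n h Estar U
  · calc ∫⁻ y, ENNReal.ofReal (U x ^ p + acceptBar n β h Estar U x y * (U y ^ p - U x ^ p))
          ∂eulerKernel n β h U x
        ≤ ENNReal.ofReal (U x ^ p + K₀ * h * U x ^ p * M) := by
          refine lintegral_eulerKernel_le_of_le_linear_add_exp hβ hh
            (fderiv_pow_gradient_nonneg (hU.contDiff.differentiable (by norm_num) x)
              (hU.pos x).le p)
            (mul_nonneg (by positivity) (hpow x)) hM.le (hmoment h hh x hx) (fun y => ?_) fun y =>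
              add_le_add_right (acceptBar_mul_pow_sub_pow_le hβ hh hh₁ hU h₁ hx hV y) _
          have hconvex := add_nonneg
            (mul_nonneg (sub_nonneg.2 (acceptBar_le_one β h Estar U x y))
              (hpow x))
            (mul_nonneg (acceptBar_nonneg (Estar := Estar) hβ hh U x y) (hpow y))
          linarith
      _ = ENNReal.ofReal ((1 + K₀ * M * h) * U x ^ p) := by ring_nf
  · have := isProbabilityMeasure_eulerKernel hβ hh U x
    have hstay (y : Euc n) : acceptBar n β h Estar U x y = 0 := if_neg fun h => hx h.1
    simp only [hstay, zero_mul, add_zero, lintegral_const, measure_univ, mul_one]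
    exact ENNReal.ofReal_le_ofReal
      (le_mul_of_one_le_left (hpow x) (le_add_of_nonneg_right (by positivity)))

end Lyapunov

section FiniteTime

variable {n : ℕ} {β h C Estar : ℝ} {U : Euc n → ℝ}

lemma ofReal_one_add_mul_pow_le {K T : ℝ} (hK : 0 ≤ K) (hh : 0 ≤ h) {k : ℕ} (hk : k * h ≤ T) :
    ENNReal.ofReal (1 + K * h) ^ k ≤ ENNReal.ofReal (exp (K * T)) := by
  rw [← ENNReal.ofReal_pow (by positivity)]
  refine ENNReal.ofReal_le_ofReal ?_
  calc (1 + K * h) ^ k ≤ exp (K * h) ^ k := by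
        gcongr
        linarith [add_one_le_exp (K * h)]
    _ = exp (K * (k * h)) := by rw [← exp_nat_mul, mul_left_comm]
    _ ≤ exp (K * T) := by gcongr

lemma exists_lintegral_pow_iterKernel_patchedKernel_le (hβ : 0 < β) (hU : SelfDominated 3 C U)
    (h₁ : ∀ x, 1 ≤ U x) (Estar T : ℝ) (p : ℕ) :
    ∃ G > 0, ∀ h, 0 < h → h ≤ 1 → ∀ k : ℕ, k * h ≤ T → ∀ x,
      ∫⁻ y, ENNReal.ofReal (U y ^ p) ∂iterKernel (patchedKernel n β h Estar U) k x
        ≤ ENNReal.ofReal (G * U x ^ p) := by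
  obtain ⟨K, hK, hstep⟩ := exists_lintegral_pow_patchedKernel_le hβ hU h₁ Estar p
  refine ⟨exp (K * T), exp_pos _, fun h hh hh₁ k hk x => ?_⟩
  have hUm := hU.contDiff.continuous.measurable
  rw [ENNReal.ofReal_mul (exp_nonneg _)]
  calc ∫⁻ y, ENNReal.ofReal (U y ^ p) ∂iterKernel (patchedKernel n β h Estar U) k x
      ≤ ENNReal.ofReal (1 + K * h) ^ k * ENNReal.ofReal (U x ^ p) :=
        lintegral_iterKernel_le_pow_mul (measurable_patchedKernel β h Estar hUm)
          (hUm.pow_const p).ennreal_ofReal (hstep h hh hh₁) k x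
    _ ≤ ENNReal.ofReal (exp (K * T)) * ENNReal.ofReal (U x ^ p) := by
        gcongr
        exact ofReal_one_add_mul_pow_le hK.le hh.le hk

lemma exists_lintegral_rejectionProb_iterKernel_le (hβ : 0 < β) (hE : 0 < Estar)
    (hU : SelfDominated 3 C U) (h₁ : ∀ x, 1 ≤ U x) (T : ℝ) :
    ∃ K > 0, ∀ h, 0 < h → h ≤ 1 → ∀ k : ℕ, k * h ≤ T → ∀ x,
      ∫⁻ y, rejectionProb n β h Estar U y ∂iterKernel (patchedKernel n β h Estar U) k x
        ≤ ENNReal.ofReal (K * (√h ^ 3 * U x ^ 3 + h ^ 3 * U x ^ 12)) := by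
  obtain ⟨K, hK, hreject⟩ := exists_rejectionProb_le hβ hE hU h₁
  obtain ⟨G, hG, hcube⟩ := exists_lintegral_pow_iterKernel_patchedKernel_le hβ hU h₁ Estar T 3
  obtain ⟨G', hG', htwelfth⟩ :=
    exists_lintegral_pow_iterKernel_patchedKernel_le hβ hU h₁ Estar T 12
  refine ⟨K * (G + G'), by positivity, fun h hh hh₁ k hk x => ?_⟩
  have hUm := hU.contDiff.continuous.measurable
  have hpos (y : Euc n) := hU.pos y
  set μ := iterKernel (patchedKernel n β h Estar U) k x
  calc ∫⁻ y, rejectionProb n β h Estar U y ∂μ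
      ≤ ∫⁻ y, (ENNReal.ofReal (K * √h ^ 3) * ENNReal.ofReal (U y ^ 3)
          + ENNReal.ofReal (K * h ^ 3) * ENNReal.ofReal (U y ^ 12)) ∂μ := by
        refine lintegral_mono fun y => (hreject h hh hh₁ y).trans_eq ?_
        have := hpos y
        rw [← ENNReal.ofReal_mul (by positivity), ← ENNReal.ofReal_mul (by positivity),
          ← ENNReal.ofReal_add (by positivity) (by positivity)]
        ring_nf
    _ = ENNReal.ofReal (K * √h ^ 3) * ∫⁻ y, ENNReal.ofReal (U y ^ 3) ∂μ
          + ENNReal.ofReal (K * h ^ 3) * ∫⁻ y, ENNReal.ofReal (U y ^ 12) ∂μ := by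
        rw [lintegral_add_left (by fun_prop), lintegral_const_mul _ (by fun_prop),
          lintegral_const_mul _ (by fun_prop)]
    _ ≤ ENNReal.ofReal (K * √h ^ 3) * ENNReal.ofReal (G * U x ^ 3)
          + ENNReal.ofReal (K * h ^ 3) * ENNReal.ofReal (G' * U x ^ 12) := by
        gcongr
        · exact hcube h hh hh₁ k hk x
        · exact htwelfth h hh hh₁ k hk x
    _ ≤ ENNReal.ofReal (K * (G + G') * (√h ^ 3 * U x ^ 3 + h ^ 3 * U x ^ 12)) := by
        have := hpos x
        rw [← ENNReal.ofReal_mul (by positivity), ← ENNReal.ofReal_mul (by positivity),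
          ← ENNReal.ofReal_add (by positivity) (by positivity)]
        refine ENNReal.ofReal_le_ofReal ?_
        have : 0 ≤ K * G' * (√h ^ 3 * U x ^ 3) := by positivity
        have : 0 ≤ K * G * (h ^ 3 * U x ^ 12) := by positivity
        linarith

lemma Assumption1.exists_selfDominated (hU : Assumption1 n β U) : ∃ C, SelfDominated 3 C U := by
  obtain ⟨C, -, hderiv⟩ := hU.deriv_bound
  have hpos (x : Euc n) : 0 < U x := one_pos.trans_le (hU.one_le x)
  refine ⟨max 1 C, hU.smooth.of_le (by norm_num), hpos, fun k hk x => ?_⟩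
  have hUx := hpos x
  have hmax : ∀ {r : ℝ}, r ≤ C * U x → r ≤ max 1 C * U x :=
    fun hr => hr.trans (by gcongr; exact le_max_right _ _)
  obtain ⟨⟨⟨-, h₃⟩, h₂⟩, h₁⟩ : ((_ ∧ _) ∧ _) ∧ _ := by
    simpa only [sup_le_iff] using hderiv x
  interval_cases k
  · rw [norm_iteratedFDeriv_zero, norm_of_nonneg hUx.le]
    exact le_mul_of_one_le_left hUx.le (le_max_left _ _)
  · rw [norm_iteratedFDeriv_one, ← norm_gradient_eq_norm_fderiv]
    exact hmax h₁
  · exact hmax h₂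
  · exact hmax h₃

lemma sqrt_pow_three_mul_add_le {u : ℝ} (hh : 0 ≤ h) (hu : 0 ≤ u) (hsmall : √h * u ^ 3 ≤ 1) :
    √h ^ 3 * u ^ 3 + h ^ 3 * u ^ 12 ≤ 2 * h * (√h * u ^ 3) := by
  set s := √h * u ^ 3 with hs
  have hs₀ : 0 ≤ s := by positivity
  calc √h ^ 3 * u ^ 3 + h ^ 3 * u ^ 12 = h * s + h * s ^ 4 := by
        rw [hs]
        linear_combination (√h * u ^ 3 - h * u ^ 12 * (√h ^ 2 + h)) * sq_sqrt hh
    _ ≤ h * s + h * s := by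
        gcongr
        exact pow_le_of_le_one hs₀ hsmall four_ne_zero
    _ = 2 * h * s := by ring

theorem patched_mala_close_to_euler_general (hβ : 0 < β) (hE : 0 < Estar)
    (hU : SelfDominated 3 C U) (h₁ : ∀ x, 1 ≤ U x) {T : ℝ} (hT : 0 < T) :
    ∃ K > 0, ∀ h, 0 < h → h < 1 → ∀ x, ∀ t ∈ Set.Icc 0 T,
      tvDist (iterKernel (patchedKernel n β h Estar U) (Nat.floor (t / h)) x)
             (iterKernel (eulerKernel n β h U) (Nat.floor (t / h)) x)
        ≤ K * √h * U x ^ 3 := by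
  obtain ⟨K, hK, hreject⟩ := exists_lintegral_rejectionProb_iterKernel_le hβ hE hU h₁ T
  refine ⟨2 + 4 * K * T, by positivity, fun h hh hh₁ x t ht => ?_⟩
  have hUm := hU.contDiff.continuous.measurable
  have := isProbabilityMeasure_patchedKernel (Estar := Estar) hβ hh hUm
  have := isProbabilityMeasure_eulerKernel hβ hh U
  have hpatched := measurable_patchedKernel β h Estar hUm
  have heuler := measurable_eulerKernel β h U
  have hUx := hU.pos x
  set k := Nat.floor (t / h)
  have hk : k * h ≤ T :=
    ((le_div_iff₀ hh).1 (Nat.floor_le (div_nonneg ht.1 hh.le))).trans ht.2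
  rw [mul_assoc]
  set s := √h * U x ^ 3
  have hs₀ : 0 ≤ s := by positivity
  rcases le_total s 1 with hsmall | hlarge
  · have hbound : tvDist (iterKernel (patchedKernel n β h Estar U) k x)
        (iterKernel (eulerKernel n β h U) k x) ≤ 2 * (k * (K * (2 * h * s))) := by
      refine tvDist_iterKernel_le_two_mul hpatched heuler
        (fun y _ hf hf₁ => lintegral_patchedKernel_le_add_rejectionProb hβ hh hUm y hf hf₁)
        (by positivity) fun j hj => (hreject h hh hh₁.le j ?_ x).trans (ENNReal.ofReal_le_ofReal ?_)
      · exact (mul_le_mul_of_nonneg_right (mod_cast hj.le) hh.le).trans hk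
      · gcongr
        exact sqrt_pow_three_mul_add_le hh.le hUx.le hsmall
    calc _ ≤ 2 * (k * (K * (2 * h * s))) := hbound
      _ = 4 * K * (k * h) * s := by ring
      _ ≤ 4 * K * T * s := by gcongr
      _ ≤ (2 + 4 * K * T) * s := by linarith
  · have := isProbabilityMeasure_iterKernel hpatched k x
    have := isProbabilityMeasure_iterKernel heuler k x
    calc _ ≤ 2 := tvDist_le_two _ _
      _ ≤ (2 + 4 * K * T) * 1 := by linarith [show 0 ≤ 4 * K * T by positivity]
      _ ≤ (2 + 4 * K * T) * s := by gcongr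

end FiniteTime

/-- Finite-time closeness of patched MALA and forward Euler in total variation. -/
theorem patched_mala_close_to_euler (n : ℕ) (β : ℝ) (hβ : 0 < β)
    (U : Euc n → ℝ) (hU : Assumption1 n β U) :
    ∃ Estar > (0:ℝ), ∀ T > (0:ℝ), ∃ C > (0:ℝ),
      ∀ h : ℝ, 0 < h → h < 1 → ∀ x : Euc n, ∀ t ∈ Set.Icc (0:ℝ) T,
        tvDist (iterKernel (patchedKernel n β h Estar U) (Nat.floor (t/h)) x)
               (iterKernel (eulerKernel n β h U) (Nat.floor (t/h)) x)
          ≤ C * Real.sqrt h * U x ^ 3 := by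
  obtain ⟨_, hdom⟩ := hU.exists_selfDominated
  exact ⟨1, one_pos, fun _ hT => patched_mala_close_to_euler_general hβ one_pos hdom hU.one_le hT⟩

end
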